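/- arXiv:1206.1892 — 6 statements merged into one kernel-verified Lean document; each statement's English description precedes it below -/
import Mathlib

section
/- Let I(L) ⊂ S be a graded lattice ideal of dimension 1 (equivalently, L ⊂ Z^s is a homogeneous lattice of rank s−1). Then the degree of S/I(L) equals the order of the torsion subgroup T(Z^s/L) of Z^s/L. -/
open MvPolynomial

/-- The binomial `t^{a⁺} - t^{a⁻}` associated to an integer vector `a ∈ ℤ^s`,
where `a⁺` and `a⁻` are the positive and negative parts of `a`. -/
noncomputable def latticeBinomial (K : Type*) [Field K] {s : ℕ} (a : Fin s → ℤ) :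
    MvPolynomial (Fin s) K :=
  (∏ i, X i ^ (a i).toNat) - ∏ i, X i ^ (-(a i)).toNat

/-- The lattice ideal `I(L) = ({t^{a⁺} - t^{a⁻} : a ∈ L})` of a lattice `L ⊆ ℤ^s`. -/
noncomputable def latticeIdeal (K : Type*) [Field K] {s : ℕ} (L : AddSubgroup (Fin s → ℤ)) :
    Ideal (MvPolynomial (Fin s) K) :=
  Ideal.span {f | ∃ a ∈ L, f = latticeBinomial K a}

/-- The Hilbert function `H_I(d) = dim_K S_d / I_d` of `S/I`, where `S_d` is the space of
homogeneous polynomials of degree `d` (together with `0`) and `I_d = I ∩ S_d`. -/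
noncomputable def hilbertFunction {K : Type*} [Field K] {s : ℕ}
    (I : Ideal (MvPolynomial (Fin s) K)) (d : ℕ) : ℕ :=
  Module.finrank K
    (↥(homogeneousSubmodule (Fin s) K d) ⧸
      (Submodule.comap (homogeneousSubmodule (Fin s) K d).subtype (Submodule.restrictScalars K I)))

/-!
The ideal `I(L)` is the kernel of the map `K[ℕ^s] → K[ℤ^s/L]` of monoid algebras, so `H(d)` is the
number of classes in `ℤ^s/L` of monomials of degree `d`. The coordinate sum descends to a surjection
`δ : ℤ^s/L → ℤ`. As `ℤ^s/L` has rank one, `ker δ` is its torsion subgroup, which is finite.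

Write `e_i` for the class of `t_i` and fix an index `o`. The differences `e_i - e_o` generate
`ker δ` as a group, hence, by finiteness, as a monoid. Adding a large multiple of `e_o` therefore
turns every element of `ker δ` into the class of a monomial: for `d ≫ 0` the classes of monomials
of degree `d` fill the whole fibre `δ⁻¹(d)`, which has as many elements as `ker δ`.
-/

section MonoidAlgebra

variable (R : Type*) {M N : Type*}

theorem finrank_supported [Semiring R] [StrongRankCondition R] (A : Set M) :
    Module.finrank R (AddMonoidAlgebra.supported R R A) = Nat.card A :=
  Module.finrank_eq_nat_card_basis ⟨AddMonoidAlgebra.supportedEquivFinsupp A⟩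

variable [AddMonoid M] [AddMonoid N]

theorem map_supported_mapDomainAlgHom [CommSemiring R] (φ : M →+ N) (A : Set M) :
    (AddMonoidAlgebra.supported R R A).map
        (AddMonoidAlgebra.mapDomainAlgHom R R φ).toLinearMap =
      AddMonoidAlgebra.supported R R (φ '' A) := by
  simp [AddMonoidAlgebra.supported_eq_span_single, Submodule.map_span, Set.image_image]

theorem ker_mapDomainAlgHom_eq_span [CommRing R] (φ : M →+ N) :
    RingHom.ker (AddMonoidAlgebra.mapDomainAlgHom R R φ) =
      Ideal.span {f | ∃ m n, φ m = φ n ∧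
        f = AddMonoidAlgebra.single m (1 : R) - AddMonoidAlgebra.single n 1} := by
  set I := Ideal.span {f | ∃ m n, φ m = φ n ∧
    f = AddMonoidAlgebra.single m (1 : R) - AddMonoidAlgebra.single n 1}
  refine le_antisymm (fun p hp ↦ ?_) (Ideal.span_le.2 ?_)
  · -- Modulo `I`, every monomial equals the representative of its fibre chosen by `ρ`.
    let ρ : N → M := Function.invFun φ
    have sub_representative_mem (q : AddMonoidAlgebra R M) :
        q - AddMonoidAlgebra.mapDomain ρ (AddMonoidAlgebra.mapDomain φ q) ∈ I := by
      induction q using AddMonoidAlgebra.induction_linear with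
      | zero => simp
      | add f g hf hg =>
        simp only [AddMonoidAlgebra.mapDomain_add, add_sub_add_comm]
        exact add_mem hf hg
      | single m r =>
        have hm : φ m = φ (ρ (φ m)) := (Function.invFun_eq ⟨m, rfl⟩).symm
        simpa [mul_sub, AddMonoidAlgebra.single_mul_single] using
          I.mul_mem_left (AddMonoidAlgebra.single 0 r) (Ideal.subset_span ⟨m, _, hm, rfl⟩)
    have hp : AddMonoidAlgebra.mapDomain φ p = 0 := hp
    simpa [hp] using sub_representative_mem p
  · rintro _ ⟨m, n, hmn, rfl⟩
    rw [SetLike.mem_coe, RingHom.mem_ker, map_sub]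
    simp [hmn]

end MonoidAlgebra

section HilbertFunction

variable {K : Type*} [Field K] {s : ℕ}

theorem hilbertFunction_ker {A : Type*} [Ring A] [Algebra K A]
    (F : MvPolynomial (Fin s) K →ₐ[K] A) (d : ℕ) :
    hilbertFunction (RingHom.ker F) d =
      Module.finrank K ((homogeneousSubmodule (Fin s) K d).map F.toLinearMap) := by
  have hker : ((RingHom.ker F).restrictScalars K).comap
      (homogeneousSubmodule (Fin s) K d).subtype =
        LinearMap.ker (F.toLinearMap.domRestrict (homogeneousSubmodule (Fin s) K d)) := rfl
  rw [hilbertFunction, hker, (LinearMap.quotKerEquivRange _).finrank_eq,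
    LinearMap.range_domRestrict]

theorem hilbertFunction_ker_mapDomainAlgHom {N : Type*} [AddMonoid N]
    (φ : (Fin s →₀ ℕ) →+ N) (d : ℕ) :
    hilbertFunction (RingHom.ker (AddMonoidAlgebra.mapDomainAlgHom K K φ)) d =
      Nat.card (φ '' {m | m.degree = d}) := by
  rw [hilbertFunction_ker, homogeneousSubmodule_eq_finsupp_supported,
    map_supported_mapDomainAlgHom, finrank_supported]

end HilbertFunction

section Torsion

theorem ker_eq_torsion_of_rank_le_one {R M N : Type*} [CommRing R] [IsDomain R]
    [AddCommGroup M] [Module R M] [AddCommGroup N] [Module R N] [Module.IsTorsionFree R N]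
    (hM : Module.rank R M ≤ 1) {f : M →ₗ[R] N} (hf : f ≠ 0) :
    LinearMap.ker f = Submodule.torsion R M := by
  refine le_antisymm (fun x hx ↦ ?_) fun x ⟨a, hax⟩ ↦ ?_
  · obtain ⟨y, hy⟩ : ∃ y, f y ≠ 0 := by simpa [LinearMap.ext_iff] using hf
    have not_linearIndependent : ¬ LinearIndependent R ![x, y] := fun h ↦ by
      simpa using h.cardinal_lift_le_rank.trans (Cardinal.lift_le.2 hM)
    obtain ⟨a, b, hab, hne⟩ : ∃ a b : R, a • x + b • y = 0 ∧ (a = 0 → b ≠ 0) := by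
      simpa [LinearIndependent.pair_iff] using not_linearIndependent
    have hb : b = 0 := by
      have := congrArg f hab
      simpa [LinearMap.mem_ker.1 hx, hy] using this
    have ha : a ≠ 0 := fun ha ↦ hne ha hb
    exact ⟨⟨a, mem_nonZeroDivisors_of_ne_zero ha⟩, by simpa [hb] using hab⟩
  · have : (a : R) • f x = 0 := by rw [← map_smul]; simp [← Submonoid.smul_def, hax]
    simpa using this

theorem finite_torsion_of_fg (G : Type*) [AddCommGroup G] [Module.Finite ℤ G] :
    Finite (AddCommGroup.torsion G) := by
  rw [← Submodule.torsion_int]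
  exact Module.finite_of_fg_torsion (Submodule.torsion ℤ G) Submodule.torsion_isTorsion

end Torsion

section Degree

theorem apply_eq_degree_of_apply_single_eq_one {ι R : Type*} [AddMonoidWithOne R]
    {f : (ι →₀ ℕ) →+ R} (hf : ∀ i, f (Finsupp.single i 1) = 1) (m : ι →₀ ℕ) :
    f m = m.degree := by
  induction m using Finsupp.induction_linear with
  | zero => simp
  | add m n hm hn => simp [hm, hn]
  | single i k =>
    rw [← mul_one k, ← smul_eq_mul, ← Finsupp.smul_single, map_nsmul, hf]
    simp

variable {ι G : Type*} [AddCommGroup G]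

theorem closure_range_sub_eq_ker {e : ι → G} (he : AddSubgroup.closure (Set.range e) = ⊤)
    {δ : G →+ ℤ} (hδ : ∀ i, δ (e i) = 1) (o : ι) :
    AddSubgroup.closure (Set.range fun i ↦ e i - e o) = δ.ker := by
  set H := AddSubgroup.closure (Set.range fun i ↦ e i - e o)
  refine le_antisymm ((AddSubgroup.closure_le _).2 ?_) fun x hx ↦ ?_
  · rintro _ ⟨i, rfl⟩
    simp [hδ]
  · have sub_degree_smul_mem (y : G) : y - δ y • e o ∈ H := by
      have hy : y ∈ AddSubgroup.closure (Set.range e) := he ▸ AddSubgroup.mem_top y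
      induction hy using AddSubgroup.closure_induction with
      | mem y hy =>
        obtain ⟨i, rfl⟩ := hy
        simpa [hδ] using AddSubgroup.subset_closure (Set.mem_range_self i)
      | zero => simp
      | add y z _ _ hy hz =>
        rw [map_add, add_smul, add_sub_add_comm]
        exact add_mem hy hz
      | neg y _ hy =>
        rw [map_neg, neg_smul, neg_sub_neg, ← neg_sub]
        exact neg_mem hy
    simpa [AddMonoidHom.mem_ker.1 hx] using sub_degree_smul_mem x

theorem addSubmonoid_closure_range_sub_eq_ker {e : ι → G}
    (he : AddSubgroup.closure (Set.range e) = ⊤) {δ : G →+ ℤ} [Finite δ.ker]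
    (hδ : ∀ i, δ (e i) = 1) (o : ι) :
    AddSubmonoid.closure (Set.range fun i ↦ e i - e o) = δ.ker.toAddSubmonoid := by
  have closure_eq := closure_range_sub_eq_ker he hδ o
  rw [← closure_eq, AddSubgroup.closure_toAddSubmonoid_of_isOfFinAddOrder]
  intro x hx
  have hx : x ∈ δ.ker := closure_eq ▸ AddSubgroup.subset_closure hx
  exact δ.ker.subtype.isOfFinAddOrder (isOfFinAddOrder_of_finite ⟨x, hx⟩)

theorem eventually_add_nsmul_mem_image_degree (φ : (ι →₀ ℕ) →+ G) (o : ι) {x : G}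
    (hx : x ∈ AddSubmonoid.closure
      (Set.range fun i ↦ φ (Finsupp.single i 1) - φ (Finsupp.single o 1))) :
    ∀ᶠ d : ℕ in Filter.atTop,
      x + d • φ (Finsupp.single o 1) ∈ φ '' {m | m.degree = d} := by
  induction hx using AddSubmonoid.closure_induction with
  | mem x hx =>
    obtain ⟨i, rfl⟩ := hx
    filter_upwards [Filter.eventually_ge_atTop 1] with d hd
    obtain ⟨d, rfl⟩ := Nat.exists_eq_add_of_le' hd
    refine ⟨Finsupp.single i 1 + d • Finsupp.single o 1, by simp [add_comm], ?_⟩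
    rw [map_add, map_nsmul, add_smul, one_smul]
    abel
  | zero =>
    exact .of_forall fun d ↦ ⟨d • Finsupp.single o 1, by simp, by rw [map_nsmul, zero_add]⟩
  | add x y _ _ hx hy =>
    obtain ⟨a, m, hm, hmx⟩ := hx.exists
    filter_upwards [(Filter.tendsto_sub_atTop_nat a).eventually hy,
      Filter.eventually_ge_atTop a] with d ⟨n, hn, hny⟩ had
    obtain ⟨d, rfl⟩ := Nat.exists_eq_add_of_le had
    simp only [Set.mem_ofPred_eq, Nat.add_sub_cancel_left] at hm hn hny
    refine ⟨m + n, by simp [hm, hn], ?_⟩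
    rw [map_add, hmx, hny, add_smul]
    abel

theorem eventually_image_degree_eq_preimage (φ : (ι →₀ ℕ) →+ G) (o : ι) {δ : G →+ ℤ}
    (hφ : AddSubgroup.closure (Set.range fun i ↦ φ (Finsupp.single i 1)) = ⊤)
    (hδ : ∀ i, δ (φ (Finsupp.single i 1)) = 1) [Finite δ.ker] :
    ∀ᶠ d : ℕ in Filter.atTop, φ '' {m | m.degree = d} = δ ⁻¹' {(d : ℤ)} := by
  have mem_closure (x : δ.ker) : (x : G) ∈ AddSubmonoid.closure
      (Set.range fun i ↦ φ (Finsupp.single i 1) - φ (Finsupp.single o 1)) := by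
    rw [addSubmonoid_closure_range_sub_eq_ker hφ hδ o]
    exact x.2
  filter_upwards [Filter.eventually_all.2 fun x : δ.ker ↦
    eventually_add_nsmul_mem_image_degree φ o (mem_closure x)] with d hd
  refine Set.Subset.antisymm ?_ fun y hy ↦ ?_
  · rintro _ ⟨m, rfl, rfl⟩
    exact apply_eq_degree_of_apply_single_eq_one (f := δ.comp φ) hδ m
  · have hy : δ y = d := hy
    have : y - d • φ (Finsupp.single o 1) ∈ δ.ker := by simp [AddMonoidHom.mem_ker, hy, hδ]
    simpa using hd ⟨_, this⟩

end Degree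

section Lattice

variable {s : ℕ} (L : AddSubgroup (Fin s → ℤ))

/-- The class in `ℤ^s / L` of the exponent vector of a monomial. -/
noncomputable def exponentClass : (Fin s →₀ ℕ) →+ (Fin s → ℤ) ⧸ L :=
  (QuotientAddGroup.mk' L).comp
    (((Nat.castAddMonoidHom ℤ).compLeft (Fin s)).comp Finsupp.coeFnAddHom)

theorem exponentClass_eq_iff (m n : Fin s →₀ ℕ) :
    exponentClass L m = exponentClass L n ↔ (fun i ↦ (m i : ℤ) - n i) ∈ L :=
  QuotientAddGroup.eq_iff_sub_mem

theorem exponentClass_single (i : Fin s) :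
    exponentClass L (Finsupp.single i 1) = QuotientAddGroup.mk (Pi.single i 1) := by
  refine congrArg _ (funext fun j ↦ ?_)
  simp [Finsupp.single_apply, Pi.single_apply, eq_comm]

theorem closure_range_exponentClass_single :
    AddSubgroup.closure (Set.range fun i ↦ exponentClass L (Finsupp.single i 1)) = ⊤ := by
  refine eq_top_iff.2 fun x _ ↦ ?_
  obtain ⟨v, rfl⟩ := QuotientAddGroup.mk'_surjective L x
  have single_eq (i : Fin s) :
      QuotientAddGroup.mk' L (Pi.single i (v i)) =
        v i • exponentClass L (Finsupp.single i 1) := by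
    rw [exponentClass_single, ← QuotientAddGroup.mk_zsmul, ← Pi.single_smul, smul_eq_mul, mul_one,
      QuotientAddGroup.mk'_apply]
  rw [← Finset.univ_sum_single v, map_sum]
  simp only [single_eq]
  exact sum_mem fun i _ ↦ zsmul_mem (AddSubgroup.subset_closure (Set.mem_range_self i)) (v i)

theorem monomial_sub_monomial_eq_mul_latticeBinomial (K : Type*) [Field K] (m n : Fin s →₀ ℕ) :
    (monomial m 1 - monomial n 1 : MvPolynomial (Fin s) K) =
      monomial (m ⊓ n) 1 * latticeBinomial K (fun i ↦ (m i : ℤ) - n i) := by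
  have hm : m ⊓ n + Finsupp.indicator .univ (fun i _ ↦ ((m i : ℤ) - n i).toNat) = m := by
    ext i
    simp only [Finsupp.add_apply, Finsupp.inf_apply, Finsupp.indicator_apply, Finset.mem_univ,
      dite_true]
    omega
  have hn : m ⊓ n + Finsupp.indicator .univ (fun i _ ↦ (-((m i : ℤ) - n i)).toNat) = n := by
    ext i
    simp only [Finsupp.add_apply, Finsupp.inf_apply, Finsupp.indicator_apply, Finset.mem_univ,
      dite_true]
    omega
  rw [latticeBinomial, prod_X_pow, prod_X_pow, mul_sub, monomial_mul, monomial_mul, hm, hn,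
    one_mul]

theorem latticeIdeal_eq_ker (K : Type*) [Field K] :
    latticeIdeal K L =
      RingHom.ker (AddMonoidAlgebra.mapDomainAlgHom K K (exponentClass L)) := by
  rw [ker_mapDomainAlgHom_eq_span]
  refine le_antisymm (Ideal.span_le.2 ?_) (Ideal.span_le.2 ?_)
  · rintro _ ⟨a, ha, rfl⟩
    rw [latticeBinomial, prod_X_pow, prod_X_pow]
    refine Ideal.subset_span ⟨_, _, (exponentClass_eq_iff L _ _).2 ?_, rfl⟩
    simpa using ha
  · rintro _ ⟨m, n, hmn, rfl⟩
    have := monomial_sub_monomial_eq_mul_latticeBinomial K m n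
    exact this ▸ Ideal.mul_mem_left _ _
      (Ideal.subset_span ⟨_, (exponentClass_eq_iff L m n).1 hmn, rfl⟩)

/-- The grading of `ℤ^s / L` by coordinate sum, for a homogeneous lattice `L`. -/
def quotientDegree (hhom : ∀ a ∈ L, ∑ i, a i = 0) : (Fin s → ℤ) ⧸ L →+ ℤ :=
  QuotientAddGroup.lift L (∑ i, Pi.evalAddMonoidHom (fun _ ↦ ℤ) i) fun a ha ↦ by
    simpa using hhom a ha

variable {L}

theorem quotientDegree_exponentClass_single (hhom : ∀ a ∈ L, ∑ i, a i = 0) (i : Fin s) :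
    quotientDegree L hhom (exponentClass L (Finsupp.single i 1)) = 1 := by
  rw [exponentClass_single]
  simp [quotientDegree]

theorem quotientDegree_surjective (hs : 0 < s) (hhom : ∀ a ∈ L, ∑ i, a i = 0) :
    Function.Surjective (quotientDegree L hhom) := fun z ↦
  ⟨z • exponentClass L (Finsupp.single ⟨0, hs⟩ 1), by
    rw [map_zsmul, quotientDegree_exponentClass_single, smul_eq_mul, mul_one]⟩

theorem ker_quotientDegree (hs : 0 < s) (hhom : ∀ a ∈ L, ∑ i, a i = 0)
    (hrank : Module.finrank ℤ L = s - 1) :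
    (quotientDegree L hhom).ker = AddCommGroup.torsion ((Fin s → ℤ) ⧸ L) := by
  have finrank_quotient : Module.finrank ℤ ((Fin s → ℤ) ⧸ L) = 1 := by
    have finrank_add : Module.finrank ℤ ((Fin s → ℤ) ⧸ L) + Module.finrank ℤ L = s :=
      L.toIntSubmodule.finrank_quotient_add_finrank.trans (Module.finrank_fin_fun ℤ)
    omega
  have ne_zero : (quotientDegree L hhom).toIntLinearMap ≠ 0 := fun h ↦ by
    obtain ⟨x, hx⟩ := quotientDegree_surjective hs hhom 1
    exact one_ne_zero (hx.symm.trans (DFunLike.congr_fun h x))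
  rw [← Submodule.torsion_int, ← ker_eq_torsion_of_rank_le_one
    (Module.rank_eq_one_iff_finrank_eq_one.2 finrank_quotient).le ne_zero]
  rfl

end Lattice

/-- Theorem: if `I(L) ⊆ S = K[t_1,…,t_s]` is a graded lattice ideal of dimension 1
(equivalently, `L` is a homogeneous lattice of rank `s-1`), then the degree of `S/I(L)`
(the eventual constant value of its Hilbert function) equals the order of the torsion
subgroup `T(ℤ^s/L)`. -/
theorem degree_latticeIdeal_eq_card_torsion
    (K : Type*) [Field K] {s : ℕ} (hs : 0 < s) (L : AddSubgroup (Fin s → ℤ))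
    (hhom : ∀ a ∈ L, ∑ i, a i = 0)
    (hrank : Module.finrank ℤ L = s - 1) :
    ∃ N : ℕ, ∀ d ≥ N, hilbertFunction (latticeIdeal K L) d =
      Nat.card (AddCommGroup.torsion ((Fin s → ℤ) ⧸ L)) := by
  have hker := ker_quotientDegree hs hhom hrank
  have : Finite (quotientDegree L hhom).ker := hker ▸ finite_torsion_of_fg ((Fin s → ℤ) ⧸ L)
  obtain ⟨N, hN⟩ := Filter.eventually_atTop.1 <|
    eventually_image_degree_eq_preimage (exponentClass L) ⟨0, hs⟩
      (closure_range_exponentClass_single L) (quotientDegree_exponentClass_single hhom)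
  refine ⟨N, fun d hd ↦ ?_⟩
  calc hilbertFunction (latticeIdeal K L) d
      = Nat.card (exponentClass L '' {m | m.degree = d}) := by
        rw [latticeIdeal_eq_ker, hilbertFunction_ker_mapDomainAlgHom]
    _ = Nat.card (quotientDegree L hhom ⁻¹' {(d : ℤ)}) := by rw [hN d hd]
    _ = Nat.card (quotientDegree L hhom).ker :=
        Nat.card_congr <|
          AddMonoidHom.fiberEquivKerOfSurjective (quotientDegree_surjective hs hhom) d
    _ = Nat.card (AddCommGroup.torsion ((Fin s → ℤ) ⧸ L)) := by rw [hker]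
end

section
/- Let L ⊂ Z^s be a homogeneous lattice of rank s−1 generated as a Z-module by the rows of an integral m×s matrix A. Then deg S/I(L) = d_1 ⋯ d_{s−1}, where d_1,…,d_{s−1} are the invariant factors of A (the positive diagonal entries of the Smith normal form of A, with d_i dividing d_{i+1}). -/
open MvPolynomial

/-!
The ideal `I(L)` is the kernel of the algebra homomorphism `K[t_1, …, t_s] → K[ℤ^s / L]` sending
`t^a` to the class of `a`, so the Hilbert function at `d` counts the classes modulo `L` of the
exponent vectors of degree `d`. These lie in a coset of `Z / L`, where `Z` is the lattice of
integer vectors of coordinate sum zero, and for large `d` they fill it: the Hilbert function is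
eventually the index `[Z : L]`. In the coordinates on `ℤ^s` given by `V`, the lattice `L` is a
product `∏ d_j ℤ` with last factor zero, and `Z`, which is the kernel of a nonzero functional
vanishing on `L`, becomes the hyperplane of vectors with last coordinate zero. Hence
`[Z : L] = ∏ |d_k|`, the product over `k < s - 1`.
-/

open Filter

section ExponentVectors

variable {ι : Type*}

variable (ι) in
/-- The inclusion `ℕ^ι → ℤ^ι` of exponent vectors into integer vectors. -/
noncomputable def exponentVector : (ι →₀ ℕ) →+ (ι → ℤ) :=
  ((Nat.castAddMonoidHom ℤ).compLeft ι).comp Finsupp.coeFnAddHom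

@[simp]
lemma exponentVector_apply (a : ι →₀ ℕ) (i : ι) : exponentVector ι a i = a i := rfl

lemma exists_exponentVector_eq [Finite ι] {v : ι → ℤ} (hv : 0 ≤ v) :
    ∃ a, exponentVector ι a = v := by
  refine ⟨Finsupp.equivFunOnFinite.symm fun i => (v i).toNat, funext fun i => ?_⟩
  simpa using hv i

/-- The class of an exponent vector modulo the lattice `L`. -/
noncomputable def latticeClass (L : AddSubgroup (ι → ℤ)) : (ι →₀ ℕ) →+ (ι → ℤ) ⧸ L :=
  (QuotientAddGroup.mk' L).comp (exponentVector ι)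

lemma latticeClass_apply (L : AddSubgroup (ι → ℤ)) (a : ι →₀ ℕ) :
    latticeClass L a = exponentVector ι a :=
  rfl

lemma latticeClass_eq_iff {L : AddSubgroup (ι → ℤ)} {a b : ι →₀ ℕ} :
    latticeClass L a = latticeClass L b ↔ exponentVector ι a - exponentVector ι b ∈ L := by
  rw [← QuotientAddGroup.eq_zero_iff, QuotientAddGroup.mk_sub, sub_eq_zero, latticeClass_apply,
    latticeClass_apply]

variable [Fintype ι]

variable (ι) in
/-- The coordinate sum `ℤ^ι → ℤ`, which extends the total degree of exponent vectors. -/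
def coordSum : (ι → ℤ) →+ ℤ :=
  ∑ i, Pi.evalAddMonoidHom (fun _ => ℤ) i

@[simp]
lemma coordSum_apply (v : ι → ℤ) : coordSum ι v = ∑ i, v i := by
  simp [coordSum]

lemma coordSum_exponentVector (a : ι →₀ ℕ) : coordSum ι (exponentVector ι a) = a.degree := by
  simp [Finsupp.degree_eq_sum]

end ExponentVectors

section HilbertFunction

variable {K : Type*} [Field K] {s : ℕ} {L : AddSubgroup (Fin s → ℤ)}

lemma latticeBinomial_eq_monomial_sub_monomial (v : Fin s → ℤ) :
    latticeBinomial K v =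
      monomial (Finsupp.equivFunOnFinite.symm fun i => (v i).toNat) 1 -
        monomial (Finsupp.equivFunOnFinite.symm fun i => (-v i).toNat) 1 := by
  simp [latticeBinomial, monomial_eq, Finsupp.prod_fintype]

lemma monomial_sub_monomial_eq_mul_latticeBinomial_s1 (a b : Fin s →₀ ℕ) (c : K) :
    monomial a c - monomial b c =
      monomial (a ⊓ b) c *
        latticeBinomial K (exponentVector (Fin s) a - exponentVector (Fin s) b) := by
  rw [latticeBinomial_eq_monomial_sub_monomial, mul_sub, monomial_mul, monomial_mul, mul_one]
  congr 3 <;> ext i <;> simp <;> omega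

lemma monomial_sub_monomial_mem_latticeIdeal {a b : Fin s →₀ ℕ}
    (h : latticeClass L a = latticeClass L b) (c : K) :
    monomial a c - monomial b c ∈ latticeIdeal K L := by
  rw [monomial_sub_monomial_eq_mul_latticeBinomial_s1]
  exact Ideal.mul_mem_left _ _ (Ideal.subset_span ⟨_, latticeClass_eq_iff.1 h, rfl⟩)

variable (K L) in
/-- The algebra homomorphism `K[t_1, …, t_s] → K[ℤ^s / L]` sending `t^a` to the class of `a`. -/
noncomputable def latticeAlgHom :
    MvPolynomial (Fin s) K →ₐ[K] AddMonoidAlgebra K ((Fin s → ℤ) ⧸ L) :=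
  AddMonoidAlgebra.mapDomainAlgHom K K (latticeClass L)

@[simp]
lemma latticeAlgHom_monomial (a : Fin s →₀ ℕ) (c : K) :
    latticeAlgHom K L (monomial a c) = AddMonoidAlgebra.single (latticeClass L a) c :=
  AddMonoidAlgebra.mapDomain_single

lemma latticeAlgHom_latticeBinomial {v : Fin s → ℤ} (hv : v ∈ L) :
    latticeAlgHom K L (latticeBinomial K v) = 0 := by
  rw [latticeBinomial_eq_monomial_sub_monomial, map_sub, latticeAlgHom_monomial,
    latticeAlgHom_monomial, sub_eq_zero]
  congr 1
  rw [latticeClass_eq_iff]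
  convert hv
  ext i
  simp

/-- A linear section `x ↦ t^{σ x}` of `latticeAlgHom` inverts it modulo `latticeIdeal`, because
`t^{σ [a]} - t^a` is a multiple of a lattice binomial. -/
lemma ker_latticeAlgHom : RingHom.ker (latticeAlgHom K L) = latticeIdeal K L := by
  refine le_antisymm (fun f hf => ?_) (Ideal.span_le.2 ?_)
  · let lift : AddMonoidAlgebra K ((Fin s → ℤ) ⧸ L) →ₗ[K] MvPolynomial (Fin s) K :=
      AddMonoidAlgebra.mapDomainLinearMap K K (Function.invFun (latticeClass L))
    let π := (Ideal.Quotient.mkₐ K (latticeIdeal K L)).toLinearMap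
    have hπ : π ∘ₗ lift ∘ₗ (latticeAlgHom K L).toLinearMap = π := by
      refine MvPolynomial.linearMap_ext fun a => LinearMap.ext fun c => ?_
      have hσ := Function.invFun_eq (f := latticeClass L) ⟨a, rfl⟩
      simpa [π, lift] using! Ideal.Quotient.eq.2 (monomial_sub_monomial_mem_latticeIdeal hσ c)
    have hf0 : π f = 0 := by
      rw [← hπ]
      simp [RingHom.mem_ker.1 hf]
    exact Ideal.Quotient.eq_zero_iff_mem.1 hf0
  · rintro _ ⟨v, hv, rfl⟩
    exact latticeAlgHom_latticeBinomial hv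

variable (K L) in
lemma map_latticeAlgHom_homogeneousSubmodule (d : ℕ) :
    (homogeneousSubmodule (Fin s) K d).map (latticeAlgHom K L).toLinearMap =
      AddMonoidAlgebra.supported K K (latticeClass L '' {a | a.degree = d}) := by
  rw [homogeneousSubmodule_eq_finsupp_supported, AddMonoidAlgebra.supported_eq_span_single,
    AddMonoidAlgebra.supported_eq_span_single, Submodule.map_span, Set.image_image,
    Set.image_image]
  congr! 2
  exact latticeAlgHom_monomial _ 1

lemma hilbertFunction_latticeIdeal (d : ℕ) :
    hilbertFunction (latticeIdeal K L) d = (latticeClass L '' {a | a.degree = d}).ncard := by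
  let φ := (latticeAlgHom K L).toLinearMap.domRestrict (homogeneousSubmodule (Fin s) K d)
  have hker : ((latticeIdeal K L).restrictScalars K).comap
      (homogeneousSubmodule (Fin s) K d).subtype = φ.ker := by
    rw [← ker_latticeAlgHom]
    rfl
  have hrange : φ.range =
      AddMonoidAlgebra.supported K K (latticeClass L '' {a | a.degree = d}) := by
    rw [LinearMap.range_domRestrict, map_latticeAlgHom_homogeneousSubmodule]
  have := ((Finsupp.finite_of_degree_eq d).image (latticeClass L)).fintype
  rw [hilbertFunction, hker, φ.quotKerEquivRange.finrank_eq, hrange,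
    (AddMonoidAlgebra.supportedEquivFinsupp _).finrank_eq, Module.finrank_finsupp_self,
    ← Nat.card_eq_fintype_card, Nat.card_coe_set_eq]

end HilbertFunction

section Asymptotics

variable {ι : Type*} [Fintype ι] {L : AddSubgroup (ι → ℤ)}

/-- Adding a large multiple of `(1, …, 1) - |ι| e_{i₀}`, chosen in `L`, makes every coordinate other
than the `i₀`-th nonnegative, and a large `d` makes up for the loss in the `i₀`-th coordinate. -/
lemma eventually_exists_latticeClass_eq [DecidableEq ι] (hL : L.relIndex (coordSum ι).ker ≠ 0)
    {v : ι → ℤ} (hv : coordSum ι v = 0) (i₀ : ι) :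
    ∀ᶠ d : ℕ in atTop, ∃ a : ι →₀ ℕ,
      a.degree = d ∧ latticeClass L a = (v + Pi.single i₀ (d : ℤ) : ι → ℤ) := by
  let k := L.relIndex (coordSum ι).ker
  let t := k * ∑ i, (v i).natAbs
  have hvt (i : ι) : 0 ≤ v i + t := by
    have h₁ : (v i).natAbs ≤ ∑ i, (v i).natAbs :=
      Finset.single_le_sum (f := fun i => (v i).natAbs) (by simp) (Finset.mem_univ i)
    have h₂ : ∑ i, (v i).natAbs ≤ t := Nat.le_mul_of_pos_left _ (Nat.pos_of_ne_zero hL)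
    omega
  let u : ι → ℤ := 1 - Pi.single i₀ (Fintype.card ι : ℤ)
  have hu : t • u ∈ L := by
    have hu₀ : u ∈ (coordSum ι).ker := by simp [u, AddMonoidHom.mem_ker]
    rw [mul_nsmul]
    exact L.nsmul_mem (L.nsmul_relIndex_mem hu₀) _
  filter_upwards [eventually_ge_atTop (t * Fintype.card ι)] with d hd
  have hnonneg : 0 ≤ v + Pi.single i₀ (d : ℤ) + t • u := by
    intro i
    have := hvt i
    rcases eq_or_ne i i₀ with rfl | hi
    · zify at hd
      simp [u]
      linarith
    · simpa [u, hi]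
  obtain ⟨a, ha⟩ := exists_exponentVector_eq hnonneg
  refine ⟨a, ?_, ?_⟩
  · zify
    rw [← coordSum_exponentVector, ha, map_add, map_add, hv, map_nsmul]
    simp [u]
  · rw [latticeClass_apply, ha, QuotientAddGroup.mk_add_of_mem _ hu]

lemma eventually_ncard_image_latticeClass [Nonempty ι]
    (hL : L.relIndex (coordSum ι).ker ≠ 0) :
    ∀ᶠ d : ℕ in atTop,
      (latticeClass L '' {a | a.degree = d}).ncard = L.relIndex (coordSum ι).ker := by
  classical
  let i₀ := Classical.arbitrary ι
  let Q := (coordSum ι).ker.map (QuotientAddGroup.mk' L)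
  have hQ : Nat.card Q = L.relIndex (coordSum ι).ker := by
    rw [← AddSubgroup.relIndex_ker, QuotientAddGroup.ker_mk']
  have : Finite Q := Nat.finite_of_card_ne_zero (hQ ▸ hL)
  have hQfin : (Q : Set ((ι → ℤ) ⧸ L)).Finite := Set.toFinite _
  have hsurj : ∀ᶠ d : ℕ in atTop, ∀ q ∈ (Q : Set ((ι → ℤ) ⧸ L)), ∃ a : ι →₀ ℕ,
      a.degree = d ∧ latticeClass L a = q + (Pi.single i₀ (d : ℤ) : ι → ℤ) := by
    refine (eventually_all_finite hQfin).2 ?_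
    rintro _ ⟨v, hv, rfl⟩
    exact eventually_exists_latticeClass_eq hL hv i₀
  filter_upwards [hsurj] with d hd
  have himage : latticeClass L '' {a | a.degree = d} =
      (· + ((Pi.single i₀ (d : ℤ) : ι → ℤ) : (ι → ℤ) ⧸ L)) '' Q := by
    refine Set.Subset.antisymm ?_ ?_
    · rintro _ ⟨a, rfl, rfl⟩
      refine ⟨_, ⟨exponentVector ι a - Pi.single i₀ (a.degree : ℤ), ?_, rfl⟩, ?_⟩
      · simp [Finsupp.degree_eq_sum, AddMonoidHom.mem_ker]
      · simp [latticeClass_apply]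
    · rintro _ ⟨q, hq, rfl⟩
      exact hd q hq
  rw [himage, Set.ncard_image_of_injective _ (add_left_injective _), ← hQ]
  exact Nat.card_coe_set_eq _

end Asymptotics

theorem eventually_hilbertFunction_latticeIdeal (K : Type*) [Field K] {s : ℕ} [NeZero s]
    {L : AddSubgroup (Fin s → ℤ)} (hL : L.relIndex (coordSum (Fin s)).ker ≠ 0) :
    ∀ᶠ d in atTop,
      hilbertFunction (latticeIdeal K L) d = L.relIndex (coordSum (Fin s)).ker := by
  simpa only [hilbertFunction_latticeIdeal] using eventually_ncard_image_latticeClass hL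

section DiagonalLattice

variable {ι : Type*} {δ : ι → ℤ} {i₀ : ι}

/-- The sublattice `∏ i, δ i ℤ` of `ℤ^ι`. -/
def diagonalLattice (δ : ι → ℤ) : AddSubgroup (ι → ℤ) :=
  AddSubgroup.pi Set.univ fun i => AddSubgroup.zmultiples (δ i)

lemma mem_diagonalLattice {v : ι → ℤ} : v ∈ diagonalLattice δ ↔ ∀ i, δ i ∣ v i := by
  simp [diagonalLattice, AddSubgroup.mem_pi, Int.mem_zmultiples_iff]

lemma single_mem_diagonalLattice [DecidableEq ι] (δ : ι → ℤ) (i : ι) :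
    Pi.single i (δ i) ∈ diagonalLattice δ := by
  refine mem_diagonalLattice.2 fun j => ?_
  rcases eq_or_ne j i with rfl | hj
  · simp
  · simp [hj]

lemma mem_ker_iff_of_diagonalLattice_le_ker [Finite ι] {ℓ : (ι → ℤ) →+ ℤ} (hℓ : ℓ ≠ 0)
    (hle : diagonalLattice δ ≤ ℓ.ker) (hδ : ∀ i ≠ i₀, δ i ≠ 0) {v : ι → ℤ} :
    v ∈ ℓ.ker ↔ v i₀ = 0 := by
  classical
  have := Fintype.ofFinite ι
  have hsingle (i : ι) (c : ℤ) : ℓ (Pi.single i c) = c * ℓ (Pi.single i 1) := by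
    rw [← smul_eq_mul, ← map_zsmul, ← Pi.single_smul, smul_eq_mul, mul_one]
  have hzero (i : ι) (hi : i ≠ i₀) : ℓ (Pi.single i 1) = 0 := by
    have h : ℓ (Pi.single i (δ i)) = 0 := hle (single_mem_diagonalLattice δ i)
    rw [hsingle] at h
    exact (mul_eq_zero.1 h).resolve_left (hδ i hi)
  have hℓ_apply (w : ι → ℤ) : ℓ w = w i₀ * ℓ (Pi.single i₀ 1) := by
    conv_lhs => rw [← Finset.univ_sum_single w]
    rw [map_sum, Fintype.sum_eq_single i₀, hsingle]
    exact fun i hi => by rw [hsingle, hzero i hi, mul_zero]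
  have hne : ℓ (Pi.single i₀ 1) ≠ 0 := fun h =>
    hℓ (DFunLike.ext _ _ fun w => by rw [hℓ_apply, h, mul_zero, AddMonoidHom.zero_apply])
  rw [AddMonoidHom.mem_ker, hℓ_apply, mul_eq_zero, or_iff_left hne]

lemma finrank_comap_diagonalLattice_le [Fintype ι] {M : Type*} [AddCommGroup M] (δ : ι → ℤ)
    (e : M ≃+ (ι → ℤ)) :
    Module.finrank ℤ ((diagonalLattice δ).comap e.toAddMonoidHom) ≤
      (Finset.univ.filter fun i => δ i ≠ 0).card := by
  let restrict : (diagonalLattice δ).comap e.toAddMonoidHom →+ ({i // δ i ≠ 0} → ℤ) :=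
    ((LinearMap.funLeft ℤ ℤ (Subtype.val : {i // δ i ≠ 0} → ι)).toAddMonoidHom.comp
      e.toAddMonoidHom).comp (AddSubgroup.subtype _)
  have hinj : Function.Injective restrict := by
    refine (injective_iff_map_eq_zero _).2 fun v hv => ?_
    have hdvd := mem_diagonalLattice.1 (AddSubgroup.mem_comap.1 v.2)
    refine Subtype.ext (e.injective (funext fun i => ?_))
    rw [ZeroMemClass.coe_zero, map_zero]
    by_cases hi : δ i = 0
    · exact zero_dvd_iff.1 (hi ▸ hdvd i)
    · exact congr_fun hv ⟨i, hi⟩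
  calc Module.finrank ℤ ((diagonalLattice δ).comap e.toAddMonoidHom)
      ≤ Module.finrank ℤ ({i // δ i ≠ 0} → ℤ) :=
        LinearMap.finrank_le_finrank_of_injective (f := restrict.toIntLinearMap) hinj
    _ = (Finset.univ.filter fun i => δ i ≠ 0).card := by
        rw [Module.finrank_fintype_fun_eq_card, Fintype.card_subtype]

variable [Fintype ι]

lemma index_diagonalLattice (δ : ι → ℤ) : (diagonalLattice δ).index = ∏ i, (δ i).natAbs := by
  simp [diagonalLattice, Int.index_zmultiples]

variable {M : Type*} [AddCommGroup M]

lemma ne_zero_of_finrank_comap_diagonalLattice (e : M ≃+ (ι → ℤ)) (hδ₀ : δ i₀ = 0)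
    (hrank : Fintype.card ι - 1 ≤
      Module.finrank ℤ ((diagonalLattice δ).comap e.toAddMonoidHom)) {i : ι} (hi : i ≠ i₀) :
    δ i ≠ 0 := by
  classical
  have hsubset : Finset.univ.filter (δ · ≠ 0) ⊆ Finset.univ.erase i₀ := fun j hj =>
    Finset.mem_erase.2 ⟨fun h => (Finset.mem_filter.1 hj).2 (h ▸ hδ₀), Finset.mem_univ j⟩
  have hcard : (Finset.univ.erase i₀).card ≤ (Finset.univ.filter (δ · ≠ 0)).card := by
    rw [Finset.card_erase_of_mem (Finset.mem_univ i₀), Finset.card_univ]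
    exact hrank.trans (finrank_comap_diagonalLattice_le δ e)
  have hmem : i ∈ Finset.univ.filter (δ · ≠ 0) := by
    rw [Finset.eq_of_subset_of_card_le hsubset hcard]
    exact Finset.mem_erase.2 ⟨hi, Finset.mem_univ i⟩
  exact (Finset.mem_filter.1 hmem).2

variable [DecidableEq ι]

lemma relIndex_diagonalLattice_ker {ℓ : (ι → ℤ) →+ ℤ} (hℓ : ℓ ≠ 0)
    (hle : diagonalLattice δ ≤ ℓ.ker) (hδ₀ : δ i₀ = 0) (hδ : ∀ i ≠ i₀, δ i ≠ 0) :
    (diagonalLattice δ).relIndex ℓ.ker = ∏ i ∈ {i₀}ᶜ, (δ i).natAbs := by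
  have hker {v : ι → ℤ} := mem_ker_iff_of_diagonalLattice_le_ker hℓ hle hδ (v := v)
  let D := diagonalLattice (Function.update δ i₀ 1)
  have hinf : D ⊓ ℓ.ker = diagonalLattice δ := by
    ext v
    rw [AddSubgroup.mem_inf, hker, mem_diagonalLattice, mem_diagonalLattice]
    constructor
    · rintro ⟨hv, hv₀⟩ i
      rcases eq_or_ne i i₀ with rfl | hi
      · simp [hv₀]
      · simpa [hi] using hv i
    · refine fun hv => ⟨fun i => ?_, zero_dvd_iff.1 (hδ₀ ▸ hv i₀)⟩
      rcases eq_or_ne i i₀ with rfl | hi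
      · simp
      · simpa [hi] using hv i
  have hsup : ℓ.ker ⊔ D = ⊤ := by
    refine eq_top_iff.2 fun v _ => AddSubgroup.mem_sup.2
      ⟨v - Pi.single i₀ (v i₀), hker.2 (by simp), Pi.single i₀ (v i₀),
        mem_diagonalLattice.2 fun i => ?_, sub_add_cancel _ _⟩
    rcases eq_or_ne i i₀ with rfl | hi
    · simp
    · simp [hi]
  calc (diagonalLattice δ).relIndex ℓ.ker
      = D.index := by
        rw [← hinf, AddSubgroup.inf_relIndex_right, ← AddSubgroup.relIndex_sup_right, hsup,
          AddSubgroup.relIndex_top_right]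
    _ = ∏ i ∈ {i₀}ᶜ, (Function.update δ i₀ 1 i).natAbs := by
        rw [index_diagonalLattice, ← Finset.prod_mul_prod_compl {i₀}, Finset.prod_singleton,
          Function.update_self, Int.natAbs_one, one_mul]
    _ = ∏ i ∈ {i₀}ᶜ, (δ i).natAbs := Finset.prod_congr rfl fun i hi => by
        rw [Function.update_of_ne (by simpa using hi)]

lemma relIndex_comap_diagonalLattice_ker (e : M ≃+ (ι → ℤ)) {ℓ : M →+ ℤ} (hℓ : ℓ ≠ 0)
    (hle : (diagonalLattice δ).comap e.toAddMonoidHom ≤ ℓ.ker) (hδ₀ : δ i₀ = 0)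
    (hδ : ∀ i ≠ i₀, δ i ≠ 0) :
    ((diagonalLattice δ).comap e.toAddMonoidHom).relIndex ℓ.ker = ∏ i ∈ {i₀}ᶜ, (δ i).natAbs := by
  have hmap : ℓ.ker.map e.toAddMonoidHom = (ℓ.comp e.symm.toAddMonoidHom).ker := by
    rw [← AddMonoidHom.comap_ker]
    exact AddSubgroup.map_equiv_eq_comap_symm e _
  rw [AddSubgroup.relIndex_comap, hmap]
  refine relIndex_diagonalLattice_ker (fun h => hℓ ?_) (fun v hv => ?_) hδ₀ hδ
  · ext x
    simpa using DFunLike.congr_fun h (e x)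
  · exact hle (by simpa)

end DiagonalLattice

section Diagonalization

variable {R : Type*} [CommRing R]

lemma mem_span_row_iff_vecMul_mem_span_row {μ ν : Type*} [Fintype μ] [DecidableEq μ] [Fintype ν]
    [DecidableEq ν] (A : Matrix μ ν R) {U : Matrix μ μ R} {V : Matrix ν ν R} (hU : IsUnit U)
    (hV : IsUnit V) {v : ν → R} :
    v ∈ Submodule.span R (Set.range A.row) ↔
      Matrix.vecMul v V ∈ Submodule.span R (Set.range (U * A * V).row) := by
  simp only [← range_vecMulLinear, LinearMap.mem_range, Matrix.vecMulLinear_apply,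
    ← Matrix.vecMul_vecMul, (Matrix.vecMul_injective_of_isUnit hV).eq_iff]
  exact (Matrix.vecMul_surjective_iff_isUnit.2 hU).exists

lemma mem_span_row_iff_dvd {m s : ℕ} {D : Matrix (Fin m) (Fin s) R} {d : ℕ → R}
    (hD : ∀ i j, D i j = if (i : ℕ) = j then d j else 0) {w : Fin s → R} :
    w ∈ Submodule.span R (Set.range D.row) ↔
      ∀ j : Fin s, (if (j : ℕ) < m then d j else 0) ∣ w j := by
  have hvecMul (c : Fin m → R) (j : Fin s) :
      Matrix.vecMul c D j = if h : (j : ℕ) < m then c ⟨j, h⟩ * d j else 0 := by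
    simp only [Matrix.vecMul, dotProduct, hD, mul_ite, mul_zero]
    split_ifs with hj
    · simp [← Fin.ext_iff (b := ⟨j, hj⟩)]
    · exact Finset.sum_eq_zero fun i _ => if_neg (by omega)
  rw [← range_vecMulLinear, LinearMap.mem_range]
  constructor
  · rintro ⟨c, rfl⟩ j
    rw [Matrix.vecMulLinear_apply, hvecMul]
    split_ifs
    · exact dvd_mul_left _ _
    · exact dvd_rfl
  · intro hw
    choose q hq using hw
    refine ⟨fun i => if h : (i : ℕ) < s then q ⟨i, h⟩ else 0, funext fun j => ?_⟩
    rw [Matrix.vecMulLinear_apply, hvecMul, hq j]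
    by_cases hj : (j : ℕ) < m
    · simp [hj, mul_comm]
    · simp [hj]

end Diagonalization

section InvariantFactors

variable {m s : ℕ} {A : Matrix (Fin m) (Fin s) ℤ} {U : Matrix (Fin m) (Fin m) ℤ}
  {V : Matrix (Fin s) (Fin s) ℤ} {d : ℕ → ℤ}

lemma exists_closure_range_row_eq_comap_diagonalLattice (hU : IsUnit U.det) (hV : IsUnit V.det)
    (hD : ∀ i j, (U * A * V) i j = if (i : ℕ) = j then d j else 0) :
    ∃ e : (Fin s → ℤ) ≃+ (Fin s → ℤ), AddSubgroup.closure (Set.range A.row) =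
      (diagonalLattice fun j : Fin s => if (j : ℕ) < m then d j else 0).comap
        e.toAddMonoidHom := by
  let e := Matrix.toLinearEquivRight'OfInv (V.nonsing_inv_mul hV) (V.mul_nonsing_inv hV)
  refine ⟨e.toAddEquiv, AddSubgroup.ext fun v => ?_⟩
  rw [← Submodule.span_int_eq_addSubgroupClosure, Submodule.mem_toAddSubgroup,
    mem_span_row_iff_vecMul_mem_span_row A (U.isUnit_iff_isUnit_det.2 hU)
      (V.isUnit_iff_isUnit_det.2 hV), mem_span_row_iff_dvd hD, AddSubgroup.mem_comap,
    mem_diagonalLattice]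
  rfl

theorem relIndex_ker_coordSum_of_diagonal (hs : 0 < s) (hU : IsUnit U.det) (hV : IsUnit V.det)
    {L : AddSubgroup (Fin s → ℤ)} (hL : L = AddSubgroup.closure (Set.range A.row))
    (hhom : L ≤ (coordSum (Fin s)).ker) (hrank : Module.finrank ℤ L = s - 1)
    (hD : ∀ i j, (U * A * V) i j = if (i : ℕ) = j ∧ (j : ℕ) < s - 1 then d j else 0) :
    L.relIndex (coordSum (Fin s)).ker = ∏ k ∈ Finset.range (s - 1), (d k).natAbs ∧
      ∏ k ∈ Finset.range (s - 1), (d k).natAbs ≠ 0 := by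
  obtain ⟨n, rfl⟩ := Nat.exists_eq_add_one.2 hs
  rw [Nat.add_sub_cancel] at *
  let δ (j : Fin (n + 1)) : ℤ := if (j : ℕ) < m then if (j : ℕ) < n then d j else 0 else 0
  obtain ⟨e, he⟩ := exists_closure_range_row_eq_comap_diagonalLattice (A := A)
    (d := fun j => if j < n then d j else 0) hU hV (by simpa only [ite_and] using hD)
  obtain rfl : L = (diagonalLattice δ).comap e.toAddMonoidHom := hL.trans he
  have hδ_last : δ (Fin.last n) = 0 := by simp [δ]
  have hδ (j : Fin (n + 1)) (hj : j ≠ Fin.last n) : δ j ≠ 0 :=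
    ne_zero_of_finrank_comap_diagonalLattice e hδ_last
      (by rw [hrank, Fintype.card_fin, Nat.add_sub_cancel]) hj
  have hδ_eq (j : Fin (n + 1)) (hj : j ≠ Fin.last n) : δ j = d j := by
    have := hδ j hj
    grind
  have hsum_ne : coordSum (Fin (n + 1)) ≠ 0 := fun h => by
    simpa using DFunLike.congr_fun h (Pi.single 0 1)
  have hprod : ∏ j ∈ {Fin.last n}ᶜ, (δ j).natAbs = ∏ k ∈ Finset.range n, (d k).natAbs := by
    rw [← Fin.image_castSucc, Finset.prod_image (Fin.castSucc_injective n).injOn,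
      Finset.prod_range]
    exact Finset.prod_congr rfl fun j _ => by rw [hδ_eq _ j.castSucc_ne_last, Fin.val_castSucc]
  rw [relIndex_comap_diagonalLattice_ker e hsum_ne hhom hδ_last hδ, hprod]
  refine ⟨rfl, hprod ▸ Finset.prod_ne_zero_iff.2 fun j hj => ?_⟩
  exact Int.natAbs_ne_zero.2 (hδ j (by simpa using hj))

end InvariantFactors

theorem degree_latticeIdeal_eq_prod_invariantFactors_general
    (K : Type*) [Field K] {s m : ℕ} (hs : 0 < s)
    (A : Matrix (Fin m) (Fin s) ℤ) (L : AddSubgroup (Fin s → ℤ))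
    (hL : L = AddSubgroup.closure (Set.range fun i : Fin m => A i))
    (hhom : ∀ a ∈ L, ∑ i, a i = 0)
    (hrank : Module.finrank ℤ L = s - 1)
    (U : Matrix (Fin m) (Fin m) ℤ) (V : Matrix (Fin s) (Fin s) ℤ)
    (hU : IsUnit U.det) (hV : IsUnit V.det)
    (dvec : ℕ → ℤ)
    (hdiag : ∀ i j, (U * A * V) i j =
      if (i : ℕ) = (j : ℕ) ∧ (j : ℕ) < s - 1 then dvec (j : ℕ) else 0) :
    ∃ N : ℕ, ∀ d ≥ N, (hilbertFunction (latticeIdeal K L) d : ℤ) =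
      |∏ k ∈ Finset.range (s - 1), dvec k| := by
  have : NeZero s := ⟨hs.ne'⟩
  have hle : L ≤ (coordSum (Fin s)).ker := fun a ha => (coordSum_apply a).trans (hhom a ha)
  obtain ⟨hindex, hne⟩ := relIndex_ker_coordSum_of_diagonal hs hU hV hL hle hrank hdiag
  obtain ⟨N, hN⟩ := eventually_atTop.1
    (eventually_hilbertFunction_latticeIdeal K (hindex ▸ hne))
  refine ⟨N, fun d hd => (congrArg Nat.cast (hN d hd)).trans ?_⟩
  rw [hindex, Nat.cast_prod, Finset.abs_prod]
  simp only [Int.natCast_natAbs]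

/-- Theorem: let `L ⊆ ℤ^s` be a homogeneous lattice of rank `s-1` generated by the rows of an
integral `m × s` matrix `A`.  If `D = UAV` is the Smith normal form of `A` (with `U, V`
unimodular and diagonal entries `d_1 ∣ d_2 ∣ ⋯ ∣ d_{s-1} > 0`, the invariant factors of `A`),
then the degree of `S/I(L)` (the eventual constant value of its Hilbert function) is
`d_1 ⋯ d_{s-1}`. -/
theorem degree_latticeIdeal_eq_prod_invariantFactors
    (K : Type*) [Field K] {s m : ℕ} (hs : 0 < s)
    (A : Matrix (Fin m) (Fin s) ℤ) (L : AddSubgroup (Fin s → ℤ))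
    (hL : L = AddSubgroup.closure (Set.range fun i : Fin m => A i))
    (hhom : ∀ a ∈ L, ∑ i, a i = 0)
    (hrank : Module.finrank ℤ L = s - 1)
    (U : Matrix (Fin m) (Fin m) ℤ) (V : Matrix (Fin s) (Fin s) ℤ)
    (hU : IsUnit U.det) (hV : IsUnit V.det)
    (dvec : ℕ → ℤ)
    (hpos : ∀ k, k < s - 1 → 0 < dvec k)
    (hdvd : ∀ k, k + 1 < s - 1 → dvec k ∣ dvec (k + 1))
    (hSmith : ∀ i j, (U * A * V) i j =
      if (i : ℕ) = (j : ℕ) ∧ (j : ℕ) < s - 1 then dvec (j : ℕ) else 0) :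
    ∃ N : ℕ, ∀ d ≥ N, (hilbertFunction (latticeIdeal K L) d : ℤ) =
      ∏ k ∈ Finset.range (s - 1), dvec k := by
  obtain ⟨N, hN⟩ := degree_latticeIdeal_eq_prod_invariantFactors_general K hs A L hL hhom hrank
    U V hU hV dvec hSmith
  have hprod := Finset.prod_pos fun k hk => hpos k (Finset.mem_range.1 hk)
  exact ⟨N, fun d hd => (hN d hd).trans (abs_of_pos hprod)⟩
end

section
/- If I(L) ⊂ S is a graded lattice ideal of dimension 1, then Z^s/L is torsion-free if and only if I(L) = (t_1 − t_s, t_2 − t_s, …, t_{s−1} − t_s). -/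
open MvPolynomial

/-!
Sending `t_i` to the class of `e_i` maps `S` to the group algebra `K[ℤ^s/L]`, where distinct group
elements stay distinct, so `t^{a⁺} - t^{a⁻}` lies in `I(L)` exactly when `a ∈ L`. Hence `L` is
determined by `I(L)`. Let `H` be the lattice of vectors with coordinate sum zero. Its ideal is
`(t_1 - t_s, …, t_{s-1} - t_s)`, so the right-hand side says `L = H`. A homogeneous lattice of rank
`s - 1` has finite index in `H`, and `ℤ^s/H ≅ ℤ` is torsion-free; so `H/L` is the torsion subgroup
of `ℤ^s/L`, and the left-hand side says `L = H` too.
-/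

section Saturation

lemma forall_torsion_quotient_eq_zero_iff_nsmulSaturated {G : Type*} [AddGroup G]
    {H : AddSubgroup G} [H.Normal] :
    (∀ x : G ⧸ H, (∃ n : ℕ, 0 < n ∧ n • x = 0) → x = 0) ↔ H.NSMulSaturated := by
  simp only [(QuotientAddGroup.mk_surjective (s := H)).forall, ← QuotientAddGroup.mk_nsmul,
    QuotientAddGroup.eq_zero_iff, AddSubmonoid.NSMulSaturated, AddSubgroup.mem_toAddSubmonoid]
  grind

lemma exists_ne_zero_smul_mem_of_finrank_eq {R M : Type*} [CommRing R] [IsDomain R]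
    [AddCommGroup M] [Module R M] {N P : Submodule R M} [Module.Finite R P] (hNP : N ≤ P)
    (hrank : Module.finrank R N = Module.finrank R P) {x : M} (hx : x ∈ P) :
    ∃ r : R, r ≠ 0 ∧ r • x ∈ N := by
  have hquot : Module.finrank R (P ⧸ N.submoduleOf P) = 0 := by
    rw [Submodule.finrank_quotient, (Submodule.submoduleOfEquivOfLe hNP).finrank_eq, hrank,
      Nat.sub_self]
  obtain ⟨r, hr⟩ := Module.finrank_eq_zero_iff_isTorsion.mp hquot
    (x := Submodule.Quotient.mk ⟨x, hx⟩)
  rw [Submonoid.smul_def, ← Submodule.Quotient.mk_smul, Submodule.Quotient.mk_eq_zero] at hr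
  exact ⟨r, nonZeroDivisors.coe_ne_zero r, hr⟩

lemma eq_of_le_of_finrank_eq_of_nsmulSaturated {M : Type*} [AddCommGroup M] {A B : AddSubgroup M}
    [Module.Finite ℤ B] (hAB : A ≤ B) (hrank : Module.finrank ℤ A = Module.finrank ℤ B)
    (hA : A.NSMulSaturated) : A = B := by
  refine le_antisymm hAB fun x hx ↦ ?_
  have : Module.Finite ℤ B.toIntSubmodule := inferInstanceAs (Module.Finite ℤ B)
  obtain ⟨n, hn, hnx⟩ := exists_ne_zero_smul_mem_of_finrank_eq
    (N := A.toIntSubmodule) (P := B.toIntSubmodule) hAB hrank hx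
  exact (AddSubgroup.saturated_iff_zsmul.mp hA n x hnx).resolve_left hn

end Saturation

section SumZeroLattice

variable {ι : Type*} [Fintype ι]

variable (ι) in
/-- The lattice of integer vectors whose coordinates sum to zero, i.e. the largest homogeneous
lattice. It is defined as a kernel so that its saturation and rank follow from general facts. -/
def sumZeroLattice : AddSubgroup (ι → ℤ) :=
  (∑ i, Pi.evalAddMonoidHom (fun _ ↦ ℤ) i).ker

lemma mem_sumZeroLattice {a : ι → ℤ} : a ∈ sumZeroLattice ι ↔ ∑ i, a i = 0 := by
  simp [sumZeroLattice, AddMonoidHom.mem_ker]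

lemma nsmulSaturated_sumZeroLattice : (sumZeroLattice ι).NSMulSaturated :=
  AddSubmonoid.ker_saturated _

lemma single_sub_single_mem_sumZeroLattice [DecidableEq ι] (i j : ι) :
    (Pi.single i 1 - Pi.single j 1 : ι → ℤ) ∈ sumZeroLattice ι := by
  simp [mem_sumZeroLattice]

instance : Module.Finite ℤ (sumZeroLattice ι) :=
  inferInstanceAs (Module.Finite ℤ (sumZeroLattice ι).toIntSubmodule)

lemma finrank_sumZeroLattice : Module.finrank ℤ (sumZeroLattice ι) = Fintype.card ι - 1 := by
  classical
  obtain _ | ⟨⟨j⟩⟩ := isEmpty_or_nonempty ι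
  · rw [Module.finrank_zero_of_subsingleton, Fintype.card_eq_zero]
  let f : (ι → ℤ) →ₗ[ℤ] ℤ := (∑ i, Pi.evalAddMonoidHom (fun _ ↦ ℤ) i).toIntLinearMap
  have hf : Function.Surjective f := fun n ↦ ⟨Pi.single j n, by simp [f]⟩
  have hrank := (LinearMap.ker f).finrank_quotient_add_finrank
  rw [(f.quotKerEquivOfSurjective hf).finrank_eq, Module.finrank_self, Module.finrank_pi] at hrank
  exact Nat.eq_sub_of_add_eq' hrank

lemma nsmulSaturated_iff_eq_sumZeroLattice {L : AddSubgroup (ι → ℤ)} (hL : L ≤ sumZeroLattice ι)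
    (hrank : Module.finrank ℤ L = Module.finrank ℤ (sumZeroLattice ι)) :
    L.NSMulSaturated ↔ L = sumZeroLattice ι := by
  constructor
  · exact eq_of_le_of_finrank_eq_of_nsmulSaturated hL hrank
  · rintro rfl
    exact nsmulSaturated_sumZeroLattice

lemma sum_toNat_eq_sum_toNat_neg {a : ι → ℤ} (ha : ∑ i, a i = 0) :
    ∑ i, (a i).toNat = ∑ i, (-a i).toNat := by
  zify
  rw [← sub_eq_zero, ← Finset.sum_sub_distrib]
  simpa only [Int.toNat_sub_toNat_neg] using ha

end SumZeroLattice

section LatticeIdeal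

lemma prod_pow_sub_prod_pow_mem {ι A : Type*} [Fintype ι] [CommRing A] {I : Ideal A} {x : ι → A}
    {y : A} (hx : ∀ i, x i - y ∈ I) {m n : ι → ℕ} (hmn : ∑ i, m i = ∑ i, n i) :
    ∏ i, x i ^ m i - ∏ i, x i ^ n i ∈ I := by
  simp only [← Ideal.Quotient.eq] at hx ⊢
  simp only [map_prod, map_pow, hx, Finset.prod_pow_eq_pow_sum, hmn]

variable {K : Type*} [Field K] {s : ℕ} {L : AddSubgroup (Fin s → ℤ)}

lemma latticeBinomial_mem_latticeIdeal {a : Fin s → ℤ} (ha : a ∈ L) :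
    latticeBinomial K a ∈ latticeIdeal K L :=
  Ideal.subset_span ⟨a, ha, rfl⟩

lemma latticeIdeal_le_iff {I : Ideal (MvPolynomial (Fin s) K)} :
    latticeIdeal K L ≤ I ↔ ∀ a ∈ L, latticeBinomial K a ∈ I := by
  rw [latticeIdeal, Ideal.span_le]
  exact ⟨fun h a ha ↦ h ⟨a, ha, rfl⟩, by rintro h _ ⟨a, ha, rfl⟩; exact h a ha⟩

variable (K L) in
/-- The algebra map from the polynomial ring to the group algebra `K[ℤ^s/L]` that sends `t^a` to the
class of `a`. Its kernel contains `I(L)` and separates `I(L)` from the binomials `t^{a⁺} - t^{a⁻}`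
with `a ∉ L`. -/
noncomputable def toQuotientGroupAlgebra :
    MvPolynomial (Fin s) K →ₐ[K] AddMonoidAlgebra K ((Fin s → ℤ) ⧸ L) :=
  aeval fun i ↦ AddMonoidAlgebra.of K _ (.ofAdd (QuotientAddGroup.mk (Pi.single i 1)))

lemma toQuotientGroupAlgebra_prod_X_pow (m : Fin s → ℕ) :
    toQuotientGroupAlgebra K L (∏ i, X i ^ m i) =
      AddMonoidAlgebra.of K _ (.ofAdd (QuotientAddGroup.mk fun i ↦ (m i : ℤ))) := by
  have hm : (fun i ↦ (m i : ℤ)) = ∑ i, m i • Pi.single i (1 : ℤ) := by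
    simpa only [natCast_zsmul] using pi_eq_sum_univ' fun i ↦ (m i : ℤ)
  rw [hm]
  simp only [toQuotientGroupAlgebra, map_prod, map_pow, aeval_X,
    QuotientAddGroup.mk_sum, QuotientAddGroup.mk_nsmul, ofAdd_sum, ofAdd_nsmul]

lemma toQuotientGroupAlgebra_latticeBinomial_eq_zero_iff {a : Fin s → ℤ} :
    toQuotientGroupAlgebra K L (latticeBinomial K a) = 0 ↔ a ∈ L := by
  have ha : (fun i ↦ ((a i).toNat : ℤ)) - (fun i ↦ ((-a i).toNat : ℤ)) = a :=
    funext fun i ↦ (a i).toNat_sub_toNat_neg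
  rw [latticeBinomial, map_sub, toQuotientGroupAlgebra_prod_X_pow,
    toQuotientGroupAlgebra_prod_X_pow, sub_eq_zero, AddMonoidAlgebra.of_injective.eq_iff,
    Multiplicative.ofAdd.injective.eq_iff, ← sub_eq_zero, ← QuotientAddGroup.mk_sub, ha,
    QuotientAddGroup.eq_zero_iff]

lemma latticeBinomial_mem_latticeIdeal_iff {a : Fin s → ℤ} :
    latticeBinomial K a ∈ latticeIdeal K L ↔ a ∈ L := by
  have hker : latticeIdeal K L ≤ RingHom.ker (toQuotientGroupAlgebra K L) :=
    latticeIdeal_le_iff.mpr fun _ ↦ toQuotientGroupAlgebra_latticeBinomial_eq_zero_iff.mpr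
  exact ⟨fun h ↦ toQuotientGroupAlgebra_latticeBinomial_eq_zero_iff.mp (hker h),
    latticeBinomial_mem_latticeIdeal⟩

lemma latticeIdeal_injective :
    Function.Injective (latticeIdeal K : AddSubgroup (Fin s → ℤ) → _) := by
  intro L L' h
  ext a
  rw [← latticeBinomial_mem_latticeIdeal_iff (K := K), h, latticeBinomial_mem_latticeIdeal_iff]

lemma latticeBinomial_single_sub_single (i j : Fin s) :
    latticeBinomial K (Pi.single i 1 - Pi.single j 1) = X i - X j := by
  obtain rfl | hij := eq_or_ne i j
  · simp [latticeBinomial]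
  have hpos (k : Fin s) : ((Pi.single i 1 - Pi.single j 1 : Fin s → ℤ) k).toNat =
      if i = k then 1 else 0 := by
    grind [Pi.sub_apply]
  have hneg (k : Fin s) : (-(Pi.single i 1 - Pi.single j 1 : Fin s → ℤ) k).toNat =
      if j = k then 1 else 0 := by
    grind [Pi.sub_apply]
  simp only [latticeBinomial, hpos, hneg, Finset.prod_pow_boole, Finset.mem_univ, if_true]

lemma latticeIdeal_sumZeroLattice (j : Fin s) :
    latticeIdeal K (sumZeroLattice (Fin s)) =
      Ideal.span {f : MvPolynomial (Fin s) K | ∃ i, i ≠ j ∧ f = X i - X j} := by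
  apply le_antisymm
  · have hX (i : Fin s) : (X i - X j : MvPolynomial (Fin s) K) ∈
        Ideal.span {f | ∃ i, i ≠ j ∧ f = X i - X j} := by
      obtain rfl | hij := eq_or_ne i j
      · rw [sub_self]
        exact Ideal.zero_mem _
      · exact Ideal.subset_span ⟨i, hij, rfl⟩
    exact latticeIdeal_le_iff.mpr fun a ha ↦
      prod_pow_sub_prod_pow_mem hX (sum_toNat_eq_sum_toNat_neg (mem_sumZeroLattice.mp ha))
  · rw [Ideal.span_le]
    rintro _ ⟨i, -, rfl⟩
    rw [← latticeBinomial_single_sub_single]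
    exact latticeBinomial_mem_latticeIdeal (single_sub_single_mem_sumZeroLattice i j)

end LatticeIdeal

/-- Theorem: if `I(L) ⊆ S` is a graded lattice ideal of dimension 1 (i.e. `L` homogeneous of
rank `s-1`), then `ℤ^s/L` is torsion-free if and only if
`I(L) = (t_1 - t_s, …, t_{s-1} - t_s)`. -/
theorem torsionFree_iff_latticeIdeal_eq_span_linear_binomials
    (K : Type*) [Field K] {s : ℕ} (hs : 0 < s)
    (L : AddSubgroup (Fin s → ℤ))
    (hhom : ∀ a ∈ L, ∑ i, a i = 0)
    (hrank : Module.finrank ℤ L = s - 1) :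
    (∀ x : (Fin s → ℤ) ⧸ L, (∃ n : ℕ, 0 < n ∧ n • x = 0) → x = 0) ↔
      latticeIdeal K L = Ideal.span {f : MvPolynomial (Fin s) K |
        ∃ i : Fin s, (i : ℕ) < s - 1 ∧
          f = X i - X (⟨s - 1, Nat.sub_lt hs Nat.one_pos⟩ : Fin s)} := by
  have hL : L ≤ sumZeroLattice (Fin s) := fun a ha ↦ mem_sumZeroLattice.mpr (hhom a ha)
  have hrankH : Module.finrank ℤ L = Module.finrank ℤ (sumZeroLattice (Fin s)) := by
    rw [hrank, finrank_sumZeroLattice, Fintype.card_fin]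
  have hlt (i : Fin s) : (i : ℕ) < s - 1 ↔ i ≠ ⟨s - 1, Nat.sub_lt hs Nat.one_pos⟩ := by
    grind
  simp only [hlt]
  rw [forall_torsion_quotient_eq_zero_iff_nsmulSaturated,
    nsmulSaturated_iff_eq_sumZeroLattice hL hrankH,
    ← latticeIdeal_sumZeroLattice, latticeIdeal_injective.eq_iff]
end

section
/- Let S = K[t_1,…,t_s] be a graded polynomial ring over a field and I ⊂ S a graded ideal. If dim S/I ≥ 2 and depth S/I > 0, then the Hilbert function of S/I is strictly increasing: H_I(i) < H_I(i+1) for all i ≥ 0. -/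
open MvPolynomial

/-! Let `R = S/I` and let `V ⊆ R` be the image of the linear forms, so that `H_I(d) = dim V^d`.
Extending scalars to an infinite field changes neither these dimensions nor the hypotheses, and
over an infinite field prime avoidance replaces the given nonzerodivisor by a linear form `x ∈ V`.
Multiplication by `x` embeds `V^d` in `V^(d+1)`. If this were onto, the finitely generated
`K[x]`-module `K[x] V^d` would be stable under `V` and contain the nonzerodivisor `x^d`. Every
element of `V` would then be integral over `K[x]`, hence so would `R`, and `dim R ≤ 1`. -/

open scoped nonZeroDivisors TensorProduct Pointwise

theorem ringKrullDim_le_of_faithfullyFlat (R S : Type*) [CommRing R] [CommRing S] [Algebra R S]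
    [Module.FaithfullyFlat R S] : ringKrullDim R ≤ ringKrullDim S := by
  refine iSup_le fun l ↦ ?_
  obtain ⟨P, hP⟩ := PrimeSpectrum.comap_surjective_of_faithfullyFlat (B := S) l.last
  have : P.asIdeal.LiesOver l.last.asIdeal := ⟨congrArg PrimeSpectrum.asIdeal hP.symm⟩
  obtain ⟨L, hL, -⟩ := Ideal.exists_ltSeries_of_hasGoingDown l P.asIdeal
  exact hL ▸ Order.LTSeries.length_le_krullDim L

theorem ringKrullDim_le_of_isIntegral (R S : Type*) [CommRing R] [CommRing S] [Algebra R S]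
    [Algebra.IsIntegral R S] : ringKrullDim S ≤ ringKrullDim R :=
  Order.krullDim_le_of_strictMono (PrimeSpectrum.comap (algebraMap R S)) fun _ _ hpq ↦
    Ideal.IsIntegral.comap_lt_comap hpq

theorem ringKrullDim_adjoin_singleton_le {R A : Type*} [CommRing R] [IsNoetherianRing R]
    [CommRing A] [Algebra R A] (x : A) :
    ringKrullDim (Algebra.adjoin R {x}) ≤ ringKrullDim R + 1 := by
  let e := Subalgebra.equivOfEq _ _ (Algebra.adjoin_singleton_eq_range_aeval R x)
  rw [← Polynomial.ringKrullDim_of_isNoetherianRing,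
    ringKrullDim_eq_of_ringEquiv e.toRingEquiv]
  exact ringKrullDim_le_of_surjective (Polynomial.aeval x).rangeRestrict.toRingHom
    (Polynomial.aeval (R := R) x).rangeRestrict_surjective

-- By Cayley–Hamilton a monic `p` kills multiplication by `x` on `N`; evaluating at `r` gives
-- `p(x) r = 0`, and `r` cancels.
theorem isIntegral_of_mul_mem_of_mem_nonZeroDivisors {R A : Type*} [CommRing R] [CommRing A]
    [Algebra R A] {N : Submodule R A} (hN : N.FG) {r x : A} (hr : r ∈ N) (hreg : r ∈ A⁰)
    (hx : ∀ n ∈ N, x * n ∈ N) : IsIntegral R x := by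
  have : Module.Finite R N := Module.Finite.iff_fg.2 hN
  let φ : Module.End R N := (LinearMap.mulLeft R x).restrict hx
  have hpow (k : ℕ) (n : N) : ((φ ^ k) n : A) = x ^ k * n := by
    simp [φ, Module.End.pow_restrict (f' := LinearMap.mulLeft R x) k hx, LinearMap.pow_mulLeft]
  have haeval (q : Polynomial R) (n : N) :
      (Polynomial.aeval φ q n : A) = Polynomial.aeval x q * n := by
    induction q using Polynomial.induction_on' with
    | add q₁ q₂ h₁ h₂ => simp [add_mul, h₁, h₂]
    | monomial k a => simp [Polynomial.aeval_monomial, Algebra.smul_def, mul_assoc, hpow]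
  obtain ⟨p, hp, hpφ⟩ := Module.End.isIntegral.isIntegral (R := R) φ
  refine ⟨p, hp, (mul_right_mem_nonZeroDivisors_eq_zero_iff hreg).1 ?_⟩
  rw [← Polynomial.aeval_def] at hpφ ⊢
  simpa [hpφ] using (haeval p ⟨r, hr⟩).symm

theorem isIntegral_adjoin_singleton_of_pow_succ_le_smul_pow {R A : Type*} [CommRing R] [CommRing A]
    [Algebra R A] {U : Submodule R A} (hU : U.FG) (hgen : Algebra.adjoin R (U : Set A) = ⊤)
    {x : A} (hx : x ∈ U) (hreg : x ∈ A⁰) {k : ℕ} (hk : U ^ (k + 1) ≤ x • U ^ k) :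
    Algebra.IsIntegral (Algebra.adjoin R {x}) A := by
  set B := Algebra.adjoin R {x}
  set N := Submodule.span B ((U ^ k : Submodule R A) : Set A) with hN
  have hNfg : N.FG := by
    obtain ⟨T, hT⟩ := hU.pow k
    exact ⟨T, by rw [hN, ← hT, Submodule.span_span_of_tower]⟩
  have hmul (u : A) (hu : u ∈ U) (n : A) (hn : n ∈ N) : u * n ∈ N := by
    induction hn using Submodule.span_induction with
    | zero => rw [mul_zero]; exact N.zero_mem
    | add y z _ _ hy hz => rw [mul_add]; exact N.add_mem hy hz
    | smul b y _ hy => rw [mul_smul_comm]; exact N.smul_mem b hy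
    | mem y hy =>
      have huy : u * y ∈ x • U ^ k := hk (pow_succ' U k ▸ Submodule.mul_mem_mul hu hy)
      obtain ⟨z, hz, hzuy⟩ := huy
      rw [← hzuy]
      exact N.smul_mem (⟨x, Algebra.self_mem_adjoin_singleton R x⟩ : B) (Submodule.subset_span hz)
  have hUint (u : A) (hu : u ∈ U) : IsIntegral B u :=
    isIntegral_of_mul_mem_of_mem_nonZeroDivisors hNfg
      (Submodule.subset_span (Submodule.pow_mem_pow U hx k)) (pow_mem hreg k) (hmul u hu)
  have htop : ⊤ ≤ (integralClosure B A).restrictScalars R := hgen ▸ Algebra.adjoin_le hUint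
  exact ⟨fun _ ↦ htop Algebra.mem_top⟩

theorem finrank_pow_lt_finrank_pow_succ_of_mem_nonZeroDivisors {K R : Type*} [Field K]
    [CommRing R] [Algebra K R] {V : Submodule K R} (hV : V.FG)
    (hgen : Algebra.adjoin K (V : Set R) = ⊤) (hdim : 2 ≤ ringKrullDim R)
    {x : R} (hx : x ∈ V) (hreg : x ∈ R⁰) (k : ℕ) :
    Module.finrank K ↥(V ^ k) < Module.finrank K ↥(V ^ (k + 1)) := by
  have : Module.Finite K ↥(V ^ (k + 1)) := Module.Finite.iff_fg.2 (hV.pow _)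
  have hle : x • V ^ k ≤ V ^ (k + 1) := by
    rintro _ ⟨v, hv, rfl⟩
    exact pow_succ' V k ▸ Submodule.mul_mem_mul hx hv
  have hfinrank : Module.finrank K ↥(x • V ^ k) = Module.finrank K ↥(V ^ k) :=
    (Submodule.equivMapOfInjective _ (fun _ _ ↦ (mul_cancel_left_mem_nonZeroDivisors hreg).1)
      _).finrank_eq.symm
  rw [← hfinrank]
  refine Submodule.finrank_lt_finrank_of_lt (hle.lt_of_not_ge fun hge ↦ ?_)
  have := isIntegral_adjoin_singleton_of_pow_succ_le_smul_pow hV hgen hx hreg hge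
  have hdim_le_one := calc
    ringKrullDim R ≤ ringKrullDim (Algebra.adjoin K {x}) := ringKrullDim_le_of_isIntegral _ R
    _ ≤ ringKrullDim K + 1 := ringKrullDim_adjoin_singleton_le x
    _ = 1 := by rw [ringKrullDim_eq_zero_of_field, zero_add]
  exact absurd (hdim.trans hdim_le_one) (by decide)

-- The vector space `V` is not the union of its proper subspaces `V ∩ p`, for `p` associated.
theorem exists_mem_mem_nonZeroDivisors_of_mem_span {K R : Type*} [Field K] [Infinite K]
    [CommRing R] [IsNoetherianRing R] [Algebra K R] {V : Submodule K R} {f : R}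
    (hf : f ∈ Ideal.span (V : Set R)) (hreg : f ∈ R⁰) : ∃ v ∈ V, v ∈ R⁰ := by
  by_contra! hzero
  have := (associatedPrimes.finite R R).to_subtype
  have hcover : ⋃ p : associatedPrimes R R,
      (((p : Ideal R).restrictScalars K).comap V.subtype : Set V) = Set.univ := by
    refine Set.eq_univ_of_forall fun v ↦ ?_
    have hv : (v : R) ∈ ⋃ p ∈ associatedPrimes R R, (p : Set R) := by
      rw [biUnion_associatedPrimes_eq_compl_nonZeroDivisors]
      exact hzero v v.2
    simpa using hv
  obtain ⟨⟨p, hp⟩, htop⟩ := Subspace.exists_eq_top_of_iUnion_eq_univ hcover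
  have hVp : (V : Set R) ⊆ p := fun v hv ↦ Submodule.eq_top_iff'.1 htop ⟨v, hv⟩
  have hfp : f ∈ ⋃ p ∈ associatedPrimes R R, (p : Set R) :=
    Set.mem_biUnion hp (Ideal.span_le.2 hVp hf)
  rw [biUnion_associatedPrimes_eq_compl_nonZeroDivisors] at hfp
  exact hfp hreg

theorem baseChange_fg {A M : Type*} (B : Type*) [CommRing A] [CommRing B] [Algebra A B]
    [AddCommGroup M] [Module A M] {N : Submodule A M} (hN : N.FG) : (N.baseChange B).FG := by
  have : Module.Finite A N := Module.Finite.iff_fg.2 hN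
  exact Module.Finite.iff_fg.1 (Module.Finite.of_surjective (Submodule.toBaseChange B N)
    (Submodule.toBaseChange_surjective B N))

theorem finrank_baseChange {K M : Type*} (F : Type*) [Field K] [Field F] [Algebra K F]
    [AddCommGroup M] [Module K M] (V : Submodule K M) :
    Module.finrank F ↥(V.baseChange F) = Module.finrank K V :=
  (Submodule.toBaseChange.toLinearEquiv F V).finrank_eq.symm.trans Module.finrank_baseChange

section BaseChange

variable {K R : Type*} (F : Type*) [CommRing K] [CommRing R] [Algebra K R] [CommRing F]
  [Algebra K F]

theorem baseChange_pow (V : Submodule K R) (k : ℕ) :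
    (V ^ k).baseChange F = V.baseChange F ^ k := by
  rw [← V.span_eq, Submodule.span_pow, Submodule.baseChange_span, Submodule.baseChange_span,
    Submodule.span_pow]
  exact congrArg _ (Set.image_pow (Algebra.TensorProduct.includeRight : R →ₐ[K] F ⊗[K] R) _ k)

theorem adjoin_baseChange_eq_top {V : Submodule K R} (hgen : Algebra.adjoin K (V : Set R) = ⊤) :
    Algebra.adjoin F (V.baseChange F : Set (F ⊗[K] R)) = ⊤ := by
  rw [Submodule.baseChange_eq_span, Algebra.adjoin_span]
  exact Algebra.TensorProduct.adjoin_one_tmul_image_eq_top _ hgen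

theorem one_tmul_mem_span_baseChange {V : Submodule K R} {f : R}
    (hf : f ∈ Ideal.span (V : Set R)) :
    (1 : F) ⊗ₜ[K] f ∈ Ideal.span (V.baseChange F : Set (F ⊗[K] R)) := by
  have h := Ideal.mem_map_of_mem (Algebra.TensorProduct.includeRight : R →ₐ[K] F ⊗[K] R) hf
  rw [Ideal.map_span] at h
  refine Ideal.span_mono ?_ h
  rintro _ ⟨v, hv, rfl⟩
  exact Submodule.tmul_mem_baseChange_of_mem 1 hv

theorem one_tmul_mem_nonZeroDivisors [Module.Flat K F] {r : R} (hr : r ∈ R⁰) :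
    (1 : F) ⊗ₜ[K] r ∈ (F ⊗[K] R)⁰ := by
  have hsmul : IsSMulRegular (R ⊗[K] F) r := Module.Flat.isSMulRegular_of_nonZeroDivisors hr
  refine mem_nonZeroDivisors_iff_left.2 fun z hz ↦ ?_
  let e := Algebra.TensorProduct.comm K F R
  have hez : r • e z = 0 := by simpa [e, Algebra.smul_def] using congrArg e hz
  exact (map_eq_zero_iff e e.injective).1 (hsmul.right_eq_zero_of_smul hez)

theorem ringKrullDim_le_ringKrullDim_tensorProduct [Module.FaithfullyFlat K F] :
    ringKrullDim R ≤ ringKrullDim (F ⊗[K] R) :=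
  (ringKrullDim_le_of_faithfullyFlat R (R ⊗[K] F)).trans_eq
    (ringKrullDim_eq_of_ringEquiv (Algebra.TensorProduct.comm K R F).toRingEquiv)

end BaseChange

theorem finrank_pow_lt_finrank_pow_succ_of_infinite {K R : Type*} [Field K] [Infinite K]
    [CommRing R] [Algebra K R] {V : Submodule K R} (hV : V.FG)
    (hgen : Algebra.adjoin K (V : Set R) = ⊤) (hdim : 2 ≤ ringKrullDim R)
    {f : R} (hf : f ∈ Ideal.span (V : Set R)) (hreg : f ∈ R⁰) (k : ℕ) :
    Module.finrank K ↥(V ^ k) < Module.finrank K ↥(V ^ (k + 1)) := by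
  have : Algebra.FiniteType K R := by
    obtain ⟨T, hT⟩ := hV
    exact ⟨T, by rw [← hgen, ← hT, Algebra.adjoin_span]⟩
  have : IsNoetherianRing R := Algebra.FiniteType.isNoetherianRing K R
  obtain ⟨x, hx, hxreg⟩ := exists_mem_mem_nonZeroDivisors_of_mem_span hf hreg
  exact finrank_pow_lt_finrank_pow_succ_of_mem_nonZeroDivisors hV hgen hdim hx hxreg k

theorem finrank_pow_lt_finrank_pow_succ {K R : Type*} [Field K] [CommRing R] [Algebra K R]
    {V : Submodule K R} (hV : V.FG) (hgen : Algebra.adjoin K (V : Set R) = ⊤)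
    (hdim : 2 ≤ ringKrullDim R) {f : R} (hf : f ∈ Ideal.span (V : Set R)) (hreg : f ∈ R⁰) (k : ℕ) :
    Module.finrank K ↥(V ^ k) < Module.finrank K ↥(V ^ (k + 1)) := by
  suffices hF : ∀ (F : Type _) [Field F] [Infinite F] [Algebra K F],
      Module.finrank K ↥(V ^ k) < Module.finrank K ↥(V ^ (k + 1)) from hF (AlgebraicClosure K)
  intro F _ _ _
  rw [← finrank_baseChange F (V ^ k), ← finrank_baseChange F (V ^ (k + 1)), baseChange_pow,
    baseChange_pow]
  exact finrank_pow_lt_finrank_pow_succ_of_infinite (baseChange_fg F hV)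
    (adjoin_baseChange_eq_top F hgen) (hdim.trans (ringKrullDim_le_ringKrullDim_tensorProduct F))
    (one_tmul_mem_span_baseChange F hf) (one_tmul_mem_nonZeroDivisors F hreg) k

theorem hilbertFunction_eq_finrank_map {K : Type*} [Field K] {s : ℕ}
    (I : Ideal (MvPolynomial (Fin s) K)) (d : ℕ) :
    hilbertFunction I d = Module.finrank K
      ↥((homogeneousSubmodule (Fin s) K d).map (Ideal.Quotient.mkₐ K I).toLinearMap) := by
  let q := (Ideal.Quotient.mkₐ K I).toLinearMap ∘ₗ (homogeneousSubmodule (Fin s) K d).subtype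
  have hker : (I.restrictScalars K).comap (homogeneousSubmodule (Fin s) K d).subtype =
      LinearMap.ker q := by
    ext p
    simp [q, Ideal.Quotient.eq_zero_iff_mem]
  have hrange : LinearMap.range q =
      (homogeneousSubmodule (Fin s) K d).map (Ideal.Quotient.mkₐ K I).toLinearMap := by
    rw [LinearMap.range_comp, Submodule.range_subtype]
  rw [hilbertFunction, hker, ← hrange]
  exact q.quotKerEquivRange.finrank_eq

theorem adjoin_map_homogeneousSubmodule_one_eq_top {K σ : Type*} [CommRing K]
    (I : Ideal (MvPolynomial σ K)) :
    Algebra.adjoin K (((homogeneousSubmodule σ K 1).map (Ideal.Quotient.mkₐ K I).toLinearMap :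
      Submodule K (MvPolynomial σ K ⧸ I)) : Set (MvPolynomial σ K ⧸ I)) = ⊤ := by
  rw [homogeneousSubmodule_one_eq_span_X, Submodule.map_span, Algebra.adjoin_span,
    AlgHom.coe_toLinearMap, ← AlgHom.map_adjoin, adjoin_range_X, Algebra.map_top,
    AlgHom.range_eq_top]
  exact Ideal.Quotient.mkₐ_surjective K I

theorem hilbertFunction_strictMono_of_two_le_krullDim_of_pos_depth_general
    (K : Type*) [Field K] {s : ℕ}
    (I : Ideal (MvPolynomial (Fin s) K))
    (hdim : 2 ≤ ringKrullDim (MvPolynomial (Fin s) K ⧸ I))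
    (hdepth : ∃ f ∈ Ideal.span (Set.range (X : Fin s → MvPolynomial (Fin s) K)),
      Ideal.Quotient.mk I f ∈ nonZeroDivisors (MvPolynomial (Fin s) K ⧸ I)) :
    ∀ i : ℕ, hilbertFunction I i < hilbertFunction I (i + 1) := by
  obtain ⟨f, hf, hreg⟩ := hdepth
  let V := (homogeneousSubmodule (Fin s) K 1).map (Ideal.Quotient.mkₐ K I).toLinearMap
  have hfV : Ideal.Quotient.mk I f ∈ Ideal.span (V : Set (MvPolynomial (Fin s) K ⧸ I)) := by
    have h := Ideal.mem_map_of_mem (Ideal.Quotient.mk I) hf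
    rw [Ideal.map_span] at h
    refine Ideal.span_mono (Set.image_mono ?_) h
    rintro _ ⟨j, rfl⟩
    exact isHomogeneous_X K j
  have hilbert_eq (d : ℕ) : hilbertFunction I d = Module.finrank K ↥(V ^ d) := by
    rw [hilbertFunction_eq_finrank_map, ← homogeneousSubmodule_one_pow, Submodule.map_pow]
  intro i
  rw [hilbert_eq, hilbert_eq]
  exact finrank_pow_lt_finrank_pow_succ ((homogeneousSubmodule_fg (Fin s) K 1).map _)
    (adjoin_map_homogeneousSubmodule_one_eq_top I) hdim hfV hreg i

/-- Proposition: let `S = K[t_1,…,t_s]` be graded by total degree and `I ⊆ S` a graded ideal.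
If `dim S/I ≥ 2` and `depth S/I > 0` (with respect to the irrelevant maximal ideal
`(t_1,…,t_s)`, i.e. `(t_1,…,t_s)` contains a non-zerodivisor on `S/I`), then the Hilbert
function of `S/I` is strictly increasing: `H_I(i) < H_I(i+1)` for all `i ≥ 0`. -/
theorem hilbertFunction_strictMono_of_two_le_krullDim_of_pos_depth
    (K : Type*) [Field K] {s : ℕ}
    (I : Ideal (MvPolynomial (Fin s) K))
    (hgraded : ∀ f ∈ I, ∀ d : ℕ, homogeneousComponent d f ∈ I)
    (hdim : 2 ≤ ringKrullDim (MvPolynomial (Fin s) K ⧸ I))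
    (hdepth : ∃ f ∈ Ideal.span (Set.range (X : Fin s → MvPolynomial (Fin s) K)),
      Ideal.Quotient.mk I f ∈ nonZeroDivisors (MvPolynomial (Fin s) K ⧸ I)) :
    ∀ i : ℕ, hilbertFunction I i < hilbertFunction I (i + 1) :=
  hilbertFunction_strictMono_of_two_le_krullDim_of_pos_depth_general K I hdim hdepth
end

section
/- Let S = K[t_1,…,t_s] be a graded polynomial ring over a field and I ⊂ S a graded ideal with depth S/I = dim S/I = 1. Then there exists an integer r ≥ 0 such that 1 = H_I(0) < H_I(1) < ⋯ < H_I(r−1) < H_I(r), and H_I(i) = deg S/I for all i ≥ r; that is, the Hilbert function of S/I is strictly increasing until it reaches the constant value deg S/I. -/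
open MvPolynomial

/-!
Write `R = S/I` and `U ⊆ R` for the space of linear forms, so that `H_I(d) = dim U ^ d`. This
dimension is unchanged by extending scalars to an infinite field, and over such a field prime
avoidance turns a nonzerodivisor in the irrelevant ideal into a linear form `l ∈ U` that is a
nonzerodivisor. Multiplication by `l` embeds `U ^ d` into `U ^ (d + 1)`; if the two have the same
dimension, then `l U ^ d = U ^ (d + 1)`, hence `l U ^ n = U ^ (n + 1)` for all `n ≥ d`, and the
Hilbert function is constant from `d` on.

It remains to see that `H_I` cannot increase forever. Let `f` be a nonzerodivisor in the irrelevant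
ideal, not necessarily homogeneous. As `dim R = 1`, the quotient `R/fR` has finite dimension `D`, so
`dim R/f^k R ≤ k D`. Elements of `f^k R` have no components of degree less than `k`, so
`H_I(0) + ⋯ + H_I(k-1) ≤ k D` for all `k`, which is impossible for a strictly increasing `H_I`.
-/

open scoped TensorProduct nonZeroDivisors

section Sequences

lemma exists_strictMono_then_constant {α : Type*} [Preorder α] {u : ℕ → α}
    (hu : ∀ d, u d < u (d + 1) ∨ ∀ n ≥ d, u n = u d) (hmono : ¬ StrictMono u) :
    ∃ r, (∀ i < r, u i < u (i + 1)) ∧ ∀ i ≥ r, u i = u r := by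
  classical
  have hex : ∃ d, ¬ u d < u (d + 1) := by
    by_contra! hlt
    exact hmono (strictMono_nat_of_lt_succ hlt)
  exact ⟨Nat.find hex, fun i hi => not_not.1 (Nat.find_min hex hi),
    (hu _).resolve_left (Nat.find_spec hex)⟩

lemma not_strictMono_of_sum_range_le_mul {u : ℕ → ℕ} {D : ℕ}
    (hu : ∀ k, ∑ d ∈ Finset.range k, u d ≤ k * D) : ¬ StrictMono u := by
  intro hmono
  have hid : ∑ d ∈ Finset.range (2 * D + 2), d ≤ (2 * D + 2) * D :=
    (Finset.sum_le_sum fun d _ => hmono.le_apply).trans (hu _)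
  have hgauss : (∑ d ∈ Finset.range (2 * D + 2), d) * 2 = (2 * D + 2) * (2 * D + 1) :=
    Finset.sum_range_id_mul_two _
  nlinarith

end Sequences

section PowersOfSubspace

variable {K R : Type*}

lemma finrank_span_singleton_mul [CommRing K] [CommRing R] [Algebra K R] {a : R}
    (ha : a ∈ R⁰) (W : Submodule K R) :
    Module.finrank K ↥((K ∙ a) * W) = Module.finrank K W := by
  have hmap : (K ∙ a) * W = W.map (LinearMap.mulLeft K a) := by
    ext x
    simp only [Submodule.mem_span_singleton_mul, Submodule.mem_map, LinearMap.mulLeft_apply]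
  have hinj : Function.Injective (LinearMap.mulLeft K a) :=
    (isRegular_iff_mem_nonZeroDivisors.2 ha).left
  rw [hmap, ← (W.equivMapOfInjective _ hinj).finrank_eq]

variable [Field K] [CommRing R] [Algebra K R] {U : Submodule K R}

lemma finrank_pow_lt_or_eventually_const_of_mem (hU : U.FG) {l : R} (hlU : l ∈ U) (hl : l ∈ R⁰)
    (d : ℕ) :
    Module.finrank K ↥(U ^ d) < Module.finrank K ↥(U ^ (d + 1)) ∨
      ∀ n ≥ d, Module.finrank K ↥(U ^ n) = Module.finrank K ↥(U ^ d) := by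
  have : Module.Finite K ↥(U ^ (d + 1)) := Module.Finite.iff_fg.2 (hU.pow _)
  have hle : (K ∙ l) * U ^ d ≤ U ^ (d + 1) := by
    rw [pow_succ']
    exact mul_le_mul_left ((Submodule.span_singleton_le_iff_mem _ _).2 hlU) _
  have hrank := finrank_span_singleton_mul hl (U ^ d)
  refine (hrank ▸ Submodule.finrank_mono hle).lt_or_eq.imp_right fun heq n hn => ?_
  have hstep : (K ∙ l) * U ^ d = U ^ (d + 1) :=
    Submodule.eq_of_le_of_finrank_eq hle (hrank.trans heq)
  induction n, hn using Nat.le_induction with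
  | base => rfl
  | succ n hn ih =>
    obtain ⟨k, rfl⟩ := Nat.exists_eq_add_of_le hn
    have : U ^ (d + k + 1) = (K ∙ l) * U ^ (d + k) := by
      rw [add_right_comm, pow_add, ← hstep, mul_assoc, ← pow_add]
    rw [this, finrank_span_singleton_mul hl, ih]

lemma exists_mem_nonZeroDivisors_of_infinite [Infinite K] [IsNoetherianRing R]
    (hU : ∃ f ∈ Ideal.span (U : Set R), f ∈ R⁰) : ∃ l ∈ U, l ∈ R⁰ := by
  by_contra! hzd
  have hfin := associatedPrimes.finite R R
  -- A vector space over an infinite field is not a finite union of proper subspaces.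
  have hcover : ⋃ P : associatedPrimes R R,
      (((P : Ideal R).restrictScalars K).comap U.subtype : Set U) = Set.univ := by
    refine Set.eq_univ_of_forall fun l => ?_
    have hl : (l : R) ∈ ⋃ P ∈ associatedPrimes R R, (P : Set R) := by
      rw [biUnion_associatedPrimes_eq_compl_nonZeroDivisors]
      exact hzd l l.2
    simpa using hl
  have := hfin.to_subtype
  obtain ⟨⟨P, hP⟩, hPU⟩ := Subspace.exists_eq_top_of_iUnion_eq_univ hcover
  have hUP : (U : Set R) ⊆ P := fun l hl => by
    have : (⟨l, hl⟩ : U) ∈ (P.restrictScalars K).comap U.subtype := hPU ▸ Submodule.mem_top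
    exact this
  obtain ⟨f, hfU, hf⟩ := hU
  have hfP : f ∈ ⋃ P ∈ associatedPrimes R R, (P : Set R) :=
    Set.mem_biUnion hP (Ideal.span_le.2 hUP hfU)
  rw [biUnion_associatedPrimes_eq_compl_nonZeroDivisors] at hfP
  exact hfP hf

end PowersOfSubspace

section BaseChange

variable {K R : Type*} (L : Type*)

lemma baseChange_submodule_pow [CommSemiring K] [Semiring R] [Algebra K R] [CommSemiring L]
    [Algebra K L] (U : Submodule K R) (n : ℕ) :
    (U ^ n).baseChange L = U.baseChange L ^ n := by
  conv_rhs => rw [← U.span_eq, Submodule.baseChange_span, Submodule.span_pow]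
  conv_lhs => rw [Submodule.pow_eq_span_pow_set, Submodule.baseChange_span]
  congr 1
  exact Set.image_pow (Algebra.TensorProduct.includeRight : R →ₐ[K] L ⊗[K] R) _ _

lemma finrank_baseChange_submodule [Field K] [Field L] [Algebra K L] [AddCommGroup R] [Module K R]
    (W : Submodule K R) : Module.finrank L (W.baseChange L) = Module.finrank K W := by
  rw [← (Submodule.toBaseChange.toLinearEquiv L W).finrank_eq, Module.finrank_baseChange]

lemma one_tmul_mem_nonZeroDivisors_s9 [CommRing K] [CommRing R] [Algebra K R] [CommRing L]
    [Algebra K L] [Module.Flat K L] {f : R} (hf : f ∈ R⁰) :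
    (1 : L) ⊗ₜ[K] f ∈ (L ⊗[K] R)⁰ := by
  have hinj : Function.Injective (LinearMap.mulLeft K f) :=
    (isRegular_iff_mem_nonZeroDivisors.2 hf).left
  have hmul : (LinearMap.mulLeft K f).lTensor L = LinearMap.mulLeft K ((1 : L) ⊗ₜ[K] f) := by
    ext
    simp
  have hinjL := Module.Flat.lTensor_preserves_injective_linearMap (M := L) _ hinj
  rw [hmul] at hinjL
  exact (isLeftRegular_iff_isRegular.1 hinjL).mem_nonZeroDivisors

lemma finrank_pow_lt_or_eventually_const [Field K] [CommRing R] [Algebra K R]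
    [Algebra.FiniteType K R] {U : Submodule K R} (hU : U.FG)
    (hreg : ∃ f ∈ Ideal.span (U : Set R), f ∈ R⁰) (d : ℕ) :
    Module.finrank K ↥(U ^ d) < Module.finrank K ↥(U ^ (d + 1)) ∨
      ∀ n ≥ d, Module.finrank K ↥(U ^ n) = Module.finrank K ↥(U ^ d) := by
  let L := AlgebraicClosure K
  have : IsNoetherianRing (L ⊗[K] R) := Algebra.FiniteType.isNoetherianRing L _
  obtain ⟨f, hfU, hf⟩ := hreg
  have hfL : (1 : L) ⊗ₜ[K] f ∈ Ideal.span (U.baseChange L : Set (L ⊗[K] R)) := by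
    have hmap := Ideal.mem_map_of_mem
      (Algebra.TensorProduct.includeRight : R →ₐ[K] L ⊗[K] R) hfU
    rw [Ideal.map_span] at hmap
    refine Ideal.span_mono ?_ hmap
    rintro _ ⟨u, hu, rfl⟩
    exact Submodule.tmul_mem_baseChange_of_mem 1 hu
  obtain ⟨l, hlU, hl⟩ :=
    exists_mem_nonZeroDivisors_of_infinite ⟨_, hfL, one_tmul_mem_nonZeroDivisors_s9 L hf⟩
  have hUL : (U.baseChange L).FG := by
    obtain ⟨T, rfl⟩ := hU
    rw [Submodule.baseChange_span]
    exact Submodule.fg_span (T.finite_toSet.image _)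
  have hgrow := finrank_pow_lt_or_eventually_const_of_mem hUL hlU hl d
  have hrank (n : ℕ) : Module.finrank L ↥(U.baseChange L ^ n) = Module.finrank K ↥(U ^ n) := by
    rw [← baseChange_submodule_pow, finrank_baseChange_submodule]
  simpa only [hrank] using hgrow

end BaseChange

section DimensionOne

lemma finrank_le_mul_finrank_quotient_range {K V E : Type*} [Field K] [AddCommGroup V] [Module K V]
    [AddCommGroup E] [Module K E] [Module.Finite K E] {φ : Module.End K V}
    [Module.Finite K (V ⧸ LinearMap.range φ)] {π : V →ₗ[K] E} (hπ : Function.Surjective π) {k : ℕ}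
    (hk : π ∘ₗ φ ^ k = 0) :
    Module.finrank K E ≤ k * Module.finrank K (V ⧸ LinearMap.range φ) := by
  obtain ⟨W, hW⟩ := (LinearMap.range φ).exists_isCompl
  let e := Submodule.quotientEquivOfIsCompl _ _ hW
  have : Module.Finite K W := Module.Finite.equiv e
  -- As `V = W + φ V`, the space `π (φ ^ i V)` exceeds `π (φ ^ (i + 1) V)` by at most `dim W`.
  have hfilter (i : ℕ) : Module.finrank K E ≤
      i * Module.finrank K W + Module.finrank K (LinearMap.range (π ∘ₗ φ ^ i)) := by
    induction i with
    | zero =>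
      rw [pow_zero, Module.End.one_eq_id, LinearMap.comp_id, LinearMap.range_eq_top.2 hπ,
        finrank_top]
      exact Nat.le_add_left _ _
    | succ i ih =>
      have hsplit : LinearMap.range (π ∘ₗ φ ^ i) =
          W.map (π ∘ₗ φ ^ i) ⊔ LinearMap.range (π ∘ₗ φ ^ (i + 1)) := by
        rw [pow_succ, Module.End.mul_eq_comp, ← LinearMap.comp_assoc, LinearMap.range_comp φ,
          ← Submodule.map_sup, sup_comm, hW.sup_eq_top, Submodule.map_top]
      have hsup := hsplit ▸ Submodule.finrank_add_le_finrank_add_finrank (W.map (π ∘ₗ φ ^ i))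
        (LinearMap.range (π ∘ₗ φ ^ (i + 1)))
      have hmap := Submodule.finrank_map_le (π ∘ₗ φ ^ i) W
      linarith
  have hlast := hfilter k
  rw [hk, LinearMap.range_zero, finrank_bot, ← e.finrank_eq] at hlast
  exact hlast

lemma finrank_le_mul_finrank_quotient_mulLeft {K R E : Type*} [Field K] [Ring R] [Algebra K R]
    [AddCommGroup E] [Module K E] [Module.Finite K E] {f : R}
    [Module.Finite K (R ⧸ LinearMap.range (LinearMap.mulLeft K f))] {π : R →ₗ[K] E}
    (hπ : Function.Surjective π) {k : ℕ} (hk : ∀ x, π (f ^ k * x) = 0) :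
    Module.finrank K E ≤ k * Module.finrank K (R ⧸ LinearMap.range (LinearMap.mulLeft K f)) := by
  refine finrank_le_mul_finrank_quotient_range hπ (LinearMap.ext fun x => ?_)
  rw [LinearMap.pow_mulLeft]
  exact hk x

lemma finite_quotient_range_mulLeft {K R : Type*} [Field K] [CommRing R] [Algebra K R]
    [Algebra.FiniteType K R] (hdim : ringKrullDim R ≤ 1) {f : R} (hf : f ∈ R⁰) :
    Module.Finite K (R ⧸ LinearMap.range (LinearMap.mulLeft K f)) := by
  have hle := (ringKrullDim_quotient_succ_le_of_nonZeroDivisor hf).trans hdim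
  have hzero : Ring.KrullDimLE 0 (R ⧸ Ideal.span {f}) := by
    rw [Ring.krullDimLE_iff, Nat.cast_zero]
    exact ENat.WithBot.add_le_add_one_right_iff.1 (hle.trans_eq (zero_add 1).symm)
  have : Module.Finite K (R ⧸ Ideal.span {f}) := (Module.finite_iff_krullDimLE_zero K _).2 hzero
  have hrange : LinearMap.range (LinearMap.mulLeft K f) = (Ideal.span {f}).restrictScalars K := by
    ext x
    simp [Ideal.mem_span_singleton', mul_comm]
  rw [hrange]
  exact this

end DimensionOne

section GradedQuotient

variable {K σ : Type*} [CommRing K] {I : Ideal (MvPolynomial σ K)}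

variable (I) in
/-- The image in `S/I` of the space of linear forms of the polynomial ring `S`. Its `d`-th power is
the image of `S_d`, which for graded `I` is the degree `d` component of `S/I`. -/
noncomputable def linearForms : Submodule K (MvPolynomial σ K ⧸ I) :=
  (homogeneousSubmodule σ K 1).map (Ideal.Quotient.mkₐ K I).toLinearMap

lemma linearForms_pow (d : ℕ) :
    linearForms I ^ d = (homogeneousSubmodule σ K d).map (Ideal.Quotient.mkₐ K I).toLinearMap := by
  rw [linearForms, ← Submodule.map_pow, homogeneousSubmodule_one_pow]

lemma linearForms_eq_span :
    linearForms I = Submodule.span K (Set.range fun i => Ideal.Quotient.mk I (X i)) := by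
  rw [linearForms, homogeneousSubmodule_one_eq_span_X, Submodule.map_span, ← Set.range_comp]
  rfl

lemma linearForms_fg [Finite σ] : (linearForms I).FG := by
  rw [linearForms_eq_span]
  exact Submodule.fg_span (Set.finite_range _)

lemma ideal_span_linearForms :
    Ideal.span (linearForms I : Set (MvPolynomial σ K ⧸ I)) =
      (idealOfVars σ K).map (Ideal.Quotient.mk I) := by
  rw [linearForms_eq_span, Ideal.span, Submodule.span_span_of_tower, Ideal.map_span,
    ← Set.range_comp]
  rfl

lemma homogeneousComponent_eq_zero_of_mem_pow_idealOfVars {R : Type*} [CommSemiring R]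
    {k d : ℕ} (hd : d < k) {p : MvPolynomial σ R} (hp : p ∈ idealOfVars σ R ^ k) :
    homogeneousComponent d p = 0 := by
  ext m
  rw [coeff_homogeneousComponent, coeff_zero, ite_eq_right_iff]
  rintro rfl
  exact (mem_pow_idealOfVars_iff' k p).1 hp m hd

/-- The projection of `S/I` onto its degree `d` component, for `I` graded. -/
noncomputable def quotientComponent (hI : ∀ f ∈ I, ∀ d, homogeneousComponent d f ∈ I) (d : ℕ) :
    (MvPolynomial σ K ⧸ I) →ₗ[K] MvPolynomial σ K ⧸ I :=
  (I.restrictScalars K).mapQ (I.restrictScalars K) (homogeneousComponent d) fun f hf => hI f hf d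

variable (hI : ∀ f ∈ I, ∀ d, homogeneousComponent d f ∈ I)

lemma quotientComponent_mk (d : ℕ) (p : MvPolynomial σ K) :
    quotientComponent hI d (Ideal.Quotient.mk I p) =
      Ideal.Quotient.mk I (homogeneousComponent d p) :=
  rfl

lemma quotientComponent_mem (d : ℕ) (x : MvPolynomial σ K ⧸ I) :
    quotientComponent hI d x ∈ linearForms I ^ d := by
  obtain ⟨p, rfl⟩ := Ideal.Quotient.mk_surjective x
  rw [quotientComponent_mk, linearForms_pow]
  exact Submodule.mem_map_of_mem (homogeneousComponent_mem d p)

lemma quotientComponent_of_mem {m d : ℕ} {x : MvPolynomial σ K ⧸ I} (hx : x ∈ linearForms I ^ m) :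
    quotientComponent hI d x = if d = m then x else 0 := by
  rw [linearForms_pow] at hx
  obtain ⟨p, hp, rfl⟩ := hx
  change quotientComponent hI d (Ideal.Quotient.mk I p) =
    if d = m then Ideal.Quotient.mk I p else 0
  rw [quotientComponent_mk, homogeneousComponent_of_mem hp, apply_ite (Ideal.Quotient.mk I),
    map_zero]

lemma quotientComponent_eq_zero_of_mem_pow {k d : ℕ} (hd : d < k) {x : MvPolynomial σ K ⧸ I}
    (hx : x ∈ (idealOfVars σ K).map (Ideal.Quotient.mk I) ^ k) : quotientComponent hI d x = 0 := by
  rw [← Ideal.map_pow] at hx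
  obtain ⟨p, hp, rfl⟩ :=
    (Ideal.mem_map_iff_of_surjective _ Ideal.Quotient.mk_surjective).1 hx
  rw [quotientComponent_mk, homogeneousComponent_eq_zero_of_mem_pow_idealOfVars hd hp, map_zero]

/-- The projection of `S/I` onto its components of degree less than `k`, for `I` graded. -/
noncomputable def quotientTruncation (k : ℕ) :
    (MvPolynomial σ K ⧸ I) →ₗ[K] (d : Fin k) → ↥(linearForms I ^ (d : ℕ)) :=
  LinearMap.pi fun d => (quotientComponent hI d).codRestrict _ (quotientComponent_mem hI d)

lemma quotientTruncation_surjective (k : ℕ) : Function.Surjective (quotientTruncation hI k) := by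
  intro e
  refine ⟨∑ i, (e i : MvPolynomial σ K ⧸ I), funext fun d => Subtype.ext ?_⟩
  change quotientComponent hI d (∑ i, (e i : MvPolynomial σ K ⧸ I)) = e d
  simp only [map_sum, quotientComponent_of_mem hI (e _).2, Fin.val_inj, Finset.sum_ite_eq,
    Finset.mem_univ, if_true]

lemma quotientTruncation_eq_zero_of_mem_pow {k : ℕ} {x : MvPolynomial σ K ⧸ I}
    (hx : x ∈ (idealOfVars σ K).map (Ideal.Quotient.mk I) ^ k) : quotientTruncation hI k x = 0 :=
  funext fun d => Subtype.ext (quotientComponent_eq_zero_of_mem_pow hI d.2 hx)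

end GradedQuotient

section HilbertFunction

lemma sum_finrank_linearForms_pow_le {K σ : Type*} [Field K] [Finite σ]
    {I : Ideal (MvPolynomial σ K)} (hI : ∀ f ∈ I, ∀ d, homogeneousComponent d f ∈ I)
    {f : MvPolynomial σ K ⧸ I} (hf : f ∈ (idealOfVars σ K).map (Ideal.Quotient.mk I))
    [Module.Finite K ((MvPolynomial σ K ⧸ I) ⧸ LinearMap.range (LinearMap.mulLeft K f))] (k : ℕ) :
    ∑ d ∈ Finset.range k, Module.finrank K ↥(linearForms I ^ d) ≤
      k * Module.finrank K
        ((MvPolynomial σ K ⧸ I) ⧸ LinearMap.range (LinearMap.mulLeft K f)) := by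
  have hfin (d : ℕ) : Module.Finite K ↥(linearForms I ^ d) :=
    Module.Finite.iff_fg.2 (linearForms_fg.pow d)
  have hkill (x : MvPolynomial σ K ⧸ I) : quotientTruncation hI k (f ^ k * x) = 0 :=
    quotientTruncation_eq_zero_of_mem_pow hI (Ideal.mul_mem_right x _ (Ideal.pow_mem_pow hf k))
  have hle := finrank_le_mul_finrank_quotient_mulLeft (quotientTruncation_surjective hI k) hkill
  rwa [Module.finrank_pi_fintype,
    Fin.sum_univ_eq_sum_range fun d => Module.finrank K ↥(linearForms I ^ d)] at hle

lemma finrank_pow_zero {K R : Type*} [Field K] [Ring R] [Algebra K R] [Nontrivial R]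
    (U : Submodule K R) : Module.finrank K ↥(U ^ 0) = 1 := by
  rw [pow_zero, Submodule.one_eq_span]
  exact finrank_span_singleton one_ne_zero

variable {K : Type*} [Field K] {s : ℕ}

lemma hilbertFunction_eq_finrank_linearForms_pow (I : Ideal (MvPolynomial (Fin s) K)) (d : ℕ) :
    hilbertFunction I d = Module.finrank K ↥(linearForms I ^ d) := by
  let f := (Ideal.Quotient.mkₐ K I).toLinearMap ∘ₗ (homogeneousSubmodule (Fin s) K d).subtype
  have hker : LinearMap.ker f = Submodule.comap (homogeneousSubmodule (Fin s) K d).subtype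
      (I.restrictScalars K) := by
    rw [LinearMap.ker_comp]
    congr 1
    ext p
    exact Ideal.Quotient.eq_zero_iff_mem
  have hrange : LinearMap.range f = linearForms I ^ d := by
    rw [LinearMap.range_comp, Submodule.range_subtype, linearForms_pow]
  rw [hilbertFunction, ← hker, f.quotKerEquivRange.finrank_eq, hrange]

lemma not_strictMono_hilbertFunction {I : Ideal (MvPolynomial (Fin s) K)}
    (hI : ∀ f ∈ I, ∀ d, homogeneousComponent d f ∈ I)
    (hdim : ringKrullDim (MvPolynomial (Fin s) K ⧸ I) ≤ 1) {f : MvPolynomial (Fin s) K ⧸ I}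
    (hfvars : f ∈ (idealOfVars (Fin s) K).map (Ideal.Quotient.mk I))
    (hf : f ∈ (MvPolynomial (Fin s) K ⧸ I)⁰) : ¬ StrictMono (hilbertFunction I) := by
  have := finite_quotient_range_mulLeft (K := K) hdim hf
  refine not_strictMono_of_sum_range_le_mul (D := Module.finrank K
    ((MvPolynomial (Fin s) K ⧸ I) ⧸ LinearMap.range (LinearMap.mulLeft K f))) fun k => ?_
  simp only [hilbertFunction_eq_finrank_linearForms_pow]
  exact sum_finrank_linearForms_pow_le hI hfvars k

end HilbertFunction

/-- Proposition: let `S = K[t_1,…,t_s]` be graded by total degree and `I ⊆ S` a graded ideal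
with `depth S/I = dim S/I = 1` (Krull dimension `1`, and the irrelevant maximal ideal
`(t_1,…,t_s)` contains a non-zerodivisor on `S/I`, i.e. `depth S/I ≥ 1`; since
`depth ≤ dim = 1`, this means `depth S/I = 1`).  Then there is an integer `r ≥ 0` such that
`1 = H_I(0) < H_I(1) < ⋯ < H_I(r-1) < H_I(r)`, and `H_I(i)` equals the constant `H_I(r)`
for all `i ≥ r`; this eventual constant value of the Hilbert function is `deg S/I`. -/
theorem hilbertFunction_strictMono_then_constant_of_dim_one
    (K : Type*) [Field K] {s : ℕ}
    (I : Ideal (MvPolynomial (Fin s) K))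
    (hgraded : ∀ f ∈ I, ∀ d : ℕ, homogeneousComponent d f ∈ I)
    (hdim : ringKrullDim (MvPolynomial (Fin s) K ⧸ I) = 1)
    (hdepth : ∃ f ∈ Ideal.span (Set.range (X : Fin s → MvPolynomial (Fin s) K)),
      Ideal.Quotient.mk I f ∈ nonZeroDivisors (MvPolynomial (Fin s) K ⧸ I)) :
    ∃ r : ℕ, hilbertFunction I 0 = 1 ∧
      (∀ i < r, hilbertFunction I i < hilbertFunction I (i + 1)) ∧
      (∀ i ≥ r, hilbertFunction I i = hilbertFunction I r) := by
  have : Nontrivial (MvPolynomial (Fin s) K ⧸ I) := by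
    by_contra htriv
    have := not_nontrivial_iff_subsingleton.1 htriv
    exact WithBot.one_ne_bot (hdim.symm.trans ringKrullDim_eq_bot_of_subsingleton)
  obtain ⟨f, hfX, hf⟩ := hdepth
  have hfvars := Ideal.mem_map_of_mem (Ideal.Quotient.mk I) hfX
  have hfU : Ideal.Quotient.mk I f ∈
      Ideal.span (linearForms I : Set (MvPolynomial (Fin s) K ⧸ I)) :=
    ideal_span_linearForms (I := I) ▸ hfvars
  have hzero : hilbertFunction I 0 = 1 := by
    rw [hilbertFunction_eq_finrank_linearForms_pow, finrank_pow_zero]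
  have hgrow (d : ℕ) : hilbertFunction I d < hilbertFunction I (d + 1) ∨
      ∀ n ≥ d, hilbertFunction I n = hilbertFunction I d := by
    simp only [hilbertFunction_eq_finrank_linearForms_pow]
    exact finrank_pow_lt_or_eventually_const linearForms_fg ⟨_, hfU, hf⟩ d
  obtain ⟨r, hlt, hconst⟩ := exists_strictMono_then_constant hgrow
    (not_strictMono_hilbertFunction hgraded hdim.le hfvars hf)
  exact ⟨r, hzero, hlt, hconst⟩
end

section
/- Let L ⊂ Z^s be a lattice and I(L) its lattice ideal. If g_1, …, g_r are binomials g_k = t^{a_k} − t^{b_k} that generate I(L), then L is generated as a group by the vectors a_1 − b_1, …, a_r − b_r. In particular, if an ideal of S is a lattice ideal, there is a unique lattice L ⊂ Z^s such that it equals I(L). -/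
open MvPolynomial

/-! Map the polynomial ring to the group algebra of `ℤ^σ ⧸ M` by sending `t^a` to the class of `a`.
The image of `t^a - t^b` vanishes if and only if `a - b ∈ M`, so `I(M)` lies in the kernel and
contains `t^a - t^b` only if `a - b ∈ M`. Conversely, if `a - b ∈ M`, then `t^a - t^b` is a monomial
multiple of a generator of `I(M)`. Hence binomials `g_k` lie in `I(M)` exactly when the vectors
`ĝ_k` lie in `M`. If the `g_k` generate `I(L)`, the lattices `M` containing all `ĝ_k` are therefore
those with `I(L) ≤ I(M)`, which are those containing `L`. -/

lemma fun_toNat_sub_toNat_neg {σ : Type*} (c : σ → ℤ) :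
    (fun i => ((c i).toNat : ℤ) - (-(c i)).toNat) = c :=
  funext fun i => Int.toNat_sub_toNat_neg (c i)

section

variable (R : Type*) [CommRing R] {σ : Type*} [Fintype σ]

/-- The pure difference binomial `t^a - t^b` with arbitrary exponents `a` and `b`, whose supports
need not be disjoint. -/
noncomputable def pureBinomial (a b : σ → ℕ) : MvPolynomial σ R :=
  (∏ i, X i ^ a i) - ∏ i, X i ^ b i

/-- The lattice ideal of `L ⊆ ℤ^σ` over a commutative ring; `latticeIdeal` is the case of a field
and `σ = Fin s`, to which it unfolds definitionally. -/
noncomputable def latticeIdealOver (L : AddSubgroup (σ → ℤ)) : Ideal (MvPolynomial σ R) :=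
  Ideal.span {f | ∃ c ∈ L, f = pureBinomial R (fun i => (c i).toNat) fun i => (-(c i)).toNat}

open Classical in
/-- The `R`-algebra homomorphism from the polynomial ring to the group algebra of `ℤ^σ ⧸ L` that
sends `t_i` to the class of the `i`-th unit vector. It identifies two monomials exactly when their
exponents agree modulo `L`, provided `R` is nontrivial. -/
noncomputable def latticeQuotientMap (L : AddSubgroup (σ → ℤ)) :
    MvPolynomial σ R →ₐ[R] AddMonoidAlgebra R ((σ → ℤ) ⧸ L) :=
  aeval fun i => AddMonoidAlgebra.single (QuotientAddGroup.mk (Pi.single i 1)) 1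

variable {R} {L M : AddSubgroup (σ → ℤ)} {a b : σ → ℕ}

lemma latticeQuotientMap_prod_X_pow (L : AddSubgroup (σ → ℤ)) (a : σ → ℕ) :
    latticeQuotientMap R L (∏ i, X i ^ a i) =
      AddMonoidAlgebra.single (QuotientAddGroup.mk fun i => (a i : ℤ)) 1 := by
  classical
  have sum_units : (fun i => (a i : ℤ)) = ∑ i, a i • (Pi.single i 1 : σ → ℤ) := by
    ext j
    simp [Finset.sum_apply, Pi.single_apply]
  rw [sum_units]
  simp [latticeQuotientMap, AddMonoidAlgebra.single_pow]

lemma latticeQuotientMap_pureBinomial_eq_zero_iff [Nontrivial R] :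
    latticeQuotientMap R L (pureBinomial R a b) = 0 ↔ (fun i => (a i : ℤ) - b i) ∈ L := by
  rw [pureBinomial, map_sub, latticeQuotientMap_prod_X_pow, latticeQuotientMap_prod_X_pow,
    sub_eq_zero, AddMonoidAlgebra.single_left_inj one_ne_zero, QuotientAddGroup.eq_iff_sub_mem]
  rfl

lemma latticeIdealOver_le_ker [Nontrivial R] :
    latticeIdealOver R L ≤ RingHom.ker (latticeQuotientMap R L) := by
  refine Ideal.span_le.2 ?_
  rintro _ ⟨c, hc, rfl⟩
  refine latticeQuotientMap_pureBinomial_eq_zero_iff.2 ?_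
  rwa [fun_toNat_sub_toNat_neg]

lemma pureBinomial_eq_mul (a b : σ → ℕ) :
    pureBinomial R a b = (∏ i, X i ^ min (a i) (b i)) *
      pureBinomial R (fun i => ((a i : ℤ) - b i).toNat) fun i => (-((a i : ℤ) - b i)).toNat := by
  have min_add_left (i : σ) : min (a i) (b i) + ((a i : ℤ) - b i).toNat = a i := by lia
  have min_add_right (i : σ) : min (a i) (b i) + (-((a i : ℤ) - b i)).toNat = b i := by lia
  simp only [pureBinomial, mul_sub, ← Finset.prod_mul_distrib, ← pow_add, min_add_left,
    min_add_right]

theorem pureBinomial_mem_latticeIdealOver_iff [Nontrivial R] :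
    pureBinomial R a b ∈ latticeIdealOver R L ↔ (fun i => (a i : ℤ) - b i) ∈ L := by
  refine ⟨fun h => latticeQuotientMap_pureBinomial_eq_zero_iff.1 (latticeIdealOver_le_ker h),
    fun h => ?_⟩
  rw [pureBinomial_eq_mul]
  exact Ideal.mul_mem_left _ _ (Ideal.subset_span ⟨_, h, rfl⟩)

theorem latticeIdealOver_le_iff [Nontrivial R] :
    latticeIdealOver R L ≤ latticeIdealOver R M ↔ L ≤ M := by
  refine ⟨fun h c hc => ?_, fun h => Ideal.span_mono fun _ ⟨c, hc, hf⟩ => ⟨c, h hc, hf⟩⟩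
  rw [← fun_toNat_sub_toNat_neg c]
  exact pureBinomial_mem_latticeIdealOver_iff.1 (h (Ideal.subset_span ⟨c, hc, rfl⟩))

theorem latticeIdealOver_injective [Nontrivial R] :
    Function.Injective (latticeIdealOver R (σ := σ)) := fun _ _ h =>
  le_antisymm (latticeIdealOver_le_iff.1 h.le) (latticeIdealOver_le_iff.1 h.ge)

theorem span_range_pureBinomial_le_latticeIdealOver_iff [Nontrivial R] {ι : Sort*}
    {a b : ι → σ → ℕ} :
    Ideal.span (Set.range fun k => pureBinomial R (a k) (b k)) ≤ latticeIdealOver R M ↔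
      AddSubgroup.closure (Set.range fun k i => (a k i : ℤ) - b k i) ≤ M := by
  simp only [Ideal.span_le, AddSubgroup.closure_le, Set.range_subset_iff, SetLike.mem_coe,
    pureBinomial_mem_latticeIdealOver_iff]

end

theorem lattice_eq_closure_of_binomial_generators_general {R σ : Type*} {ι : Sort*} [CommRing R]
    [Nontrivial R] [Fintype σ] (L : AddSubgroup (σ → ℤ)) (a b : ι → σ → ℕ)
    (hgen : latticeIdealOver R L = Ideal.span (Set.range fun k => pureBinomial R (a k) (b k))) :
    L = AddSubgroup.closure (Set.range fun k i => (a k i : ℤ) - b k i) ∧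
      ∀ L' : AddSubgroup (σ → ℤ), latticeIdealOver R L' = latticeIdealOver R L → L' = L := by
  refine ⟨eq_of_forall_ge_iff fun M => ?_, fun L' h => latticeIdealOver_injective h⟩
  rw [← latticeIdealOver_le_iff (R := R), hgen, span_range_pureBinomial_le_latticeIdealOver_iff]

/-- Lemma: let `L ⊆ ℤ^s` be a lattice and `I(L)` its lattice ideal.  If the binomials
`g_k = t^{a_k} - t^{b_k}`, `k = 1, …, r`, generate `I(L)`, then `L` is generated as a group
by the vectors `ĝ_k = a_k - b_k`.  In particular, if an ideal is a lattice ideal, there is a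
unique lattice `L` with the ideal equal to `I(L)`. -/
theorem lattice_eq_closure_of_binomial_generators
    (K : Type*) [Field K] {s r : ℕ} (L : AddSubgroup (Fin s → ℤ))
    (a b : Fin r → Fin s → ℕ)
    (hgen : latticeIdeal K L = Ideal.span (Set.range fun k : Fin r =>
      ((∏ i, X i ^ a k i) - ∏ i, X i ^ b k i : MvPolynomial (Fin s) K))) :
    L = AddSubgroup.closure (Set.range fun k : Fin r =>
        (fun i => (a k i : ℤ) - (b k i : ℤ))) ∧
      ∀ L' : AddSubgroup (Fin s → ℤ),
        (latticeIdeal K L' : Ideal (MvPolynomial (Fin s) K)) = latticeIdeal K L → L' = L :=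
  lattice_eq_closure_of_binomial_generators_general L a b hgen
end
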